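/- arXiv:2203.08247 — 2 statements merged into one kernel-verified Lean document; each statement's English description precedes it below -/
import Mathlib

section
/- Let (M,g,h·dvol_g) be a non-flat 3-dimensional isotropic solution of the vacuum weighted Einstein field equation whose Ricci operator is 2-step nilpotent. Then (M,g) is a plane wave, and there exist local coordinates (u,v,x) in which g = dv(2du − (α''(v)/α(v))·x²·dv) + dx², where h(u,v,x) = α(v) is a function of v alone with α''(v) ≠ 0. -/
noncomputable section
open Matrix

/-- Points of the coordinate space `ℝⁿ`. -/
abbrev Pt (n : ℕ) := Fin n → ℝ

/-- Partial derivative `∂_i f` in the `i`-th coordinate direction. -/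
def pd {n : ℕ} (i : Fin n) (f : Pt n → ℝ) (p : Pt n) : ℝ :=
  fderiv ℝ f p (Pi.single i 1)

/-- The inverse metric `g^{ij}` of a metric `g` given as a matrix of components. -/
def ginv {n : ℕ} (g : Pt n → Fin n → Fin n → ℝ) (p : Pt n) : Matrix (Fin n) (Fin n) ℝ :=
  (Matrix.of (g p))⁻¹

/-- Christoffel symbols `Γ^k_{ij}` of the Levi-Civita connection of `g`. -/
def chr {n : ℕ} (g : Pt n → Fin n → Fin n → ℝ) (k i j : Fin n) (p : Pt n) : ℝ :=
  (1/2) * ∑ l, ginv g p k l *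
    (pd i (fun q => g q l j) p + pd j (fun q => g q l i) p - pd l (fun q => g q i j) p)

/-- Components `R_{ij}` of the Ricci tensor of `g`. -/
def RicciT {n : ℕ} (g : Pt n → Fin n → Fin n → ℝ) (i j : Fin n) (p : Pt n) : ℝ :=
  (∑ k, pd k (fun q => chr g k i j q) p) - (∑ k, pd j (fun q => chr g k i k q) p)
  + (∑ k, ∑ l, chr g k k l p * chr g l i j p) - (∑ k, ∑ l, chr g k j l p * chr g l i k p)

/-- Scalar curvature `τ = g^{ij} R_{ij}` of `g`. -/
def Scal {n : ℕ} (g : Pt n → Fin n → Fin n → ℝ) (p : Pt n) : ℝ :=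
  ∑ i, ∑ j, ginv g p i j * RicciT g i j p

/-- Components of the Hessian `Hes_f` of a function `f` with respect to `g`. -/
def Hess {n : ℕ} (g : Pt n → Fin n → Fin n → ℝ) (f : Pt n → ℝ) (i j : Fin n) (p : Pt n) : ℝ :=
  pd i (fun q => pd j f q) p - ∑ k, chr g k i j p * pd k f p

/-- Laplacian `Δf = g^{ij}(Hes_f)_{ij}`. -/
def Lap {n : ℕ} (g : Pt n → Fin n → Fin n → ℝ) (f : Pt n → ℝ) (p : Pt n) : ℝ :=
  ∑ i, ∑ j, ginv g p i j * Hess g f i j p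

/-- Components of the gradient `∇f = g^{ij} ∂_j f ∂_i`. -/
def gradV {n : ℕ} (g : Pt n → Fin n → Fin n → ℝ) (f : Pt n → ℝ) (p : Pt n) (i : Fin n) : ℝ :=
  ∑ j, ginv g p i j * pd j f p

/-- `‖∇f‖² = g(∇f,∇f) = g^{ij} ∂_i f ∂_j f`. -/
def gradNorm2 {n : ℕ} (g : Pt n → Fin n → Fin n → ℝ) (f : Pt n → ℝ) (p : Pt n) : ℝ :=
  ∑ i, ∑ j, ginv g p i j * pd i f p * pd j f p

/-- The vacuum weighted Einstein field equation
`h·ρ − Hes_h + (Δh + Λ)g = 0` at the point `p`. -/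
def WEFEat {n : ℕ} (g : Pt n → Fin n → Fin n → ℝ) (h : Pt n → ℝ) (Λ : ℝ) (p : Pt n) : Prop :=
  ∀ i j, h p * RicciT g i j p - Hess g h i j p + (Lap g h p + Λ) * g p i j = 0

/-- The Ricci operator `Ric = g^{-1}·ρ` as a matrix (column `j` lists the
components of `Ric ∂_j`). -/
def RicOpM {n : ℕ} (g : Pt n → Fin n → Fin n → ℝ) (p : Pt n) : Matrix (Fin n) (Fin n) ℝ :=
  Matrix.of fun i j => ∑ k, ginv g p i k * RicciT g k j p

/-- The `k`-th component of the covariant derivative `∇_{∂_i} V`. -/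
def covD {n : ℕ} (g : Pt n → Fin n → Fin n → ℝ) (V : Pt n → Fin n → ℝ) (i k : Fin n)
    (p : Pt n) : ℝ :=
  pd i (fun q => V q k) p + ∑ m, chr g k i m p * V p m

/-- Components `R^l_{ijk}` of the (1,3)-curvature tensor:
`R(∂_i,∂_j)∂_k = R^l_{ijk} ∂_l`. -/
def RiemUp {n : ℕ} (g : Pt n → Fin n → Fin n → ℝ) (l i j k : Fin n) (p : Pt n) : ℝ :=
  pd i (fun q => chr g l j k q) p - pd j (fun q => chr g l i k q) p
  + (∑ m, chr g l i m p * chr g m j k p) - (∑ m, chr g l j m p * chr g m i k p)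

/-- The (0,4)-curvature tensor `R(∂_i,∂_j,∂_k,∂_l) = g(R(∂_i,∂_j)∂_k, ∂_l)`. -/
def RiemLow {n : ℕ} (g : Pt n → Fin n → Fin n → ℝ) (i j k l : Fin n) (p : Pt n) : ℝ :=
  ∑ m, g p l m * RiemUp g m i j k p

/-- A symmetric matrix of Lorentzian signature `(−,+,+)`. -/
def IsLorentz3 (A : Matrix (Fin 3) (Fin 3) ℝ) : Prop :=
  A.IsSymm ∧ ∃ P : Matrix (Fin 3) (Fin 3) ℝ, IsUnit P.det ∧
    Pᵀ * A * P = Matrix.diagonal ![(-1 : ℝ), 1, 1]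

/-- Jacobian matrix of a coordinate change `ψ`. -/
def jac {n : ℕ} (ψ : Pt n → Pt n) (q : Pt n) : Matrix (Fin n) (Fin n) ℝ :=
  Matrix.of fun i j => pd j (fun r => ψ r i) q

/-- Pullback `ψ^*g` of the metric `g` under the coordinate change `ψ`. -/
def pullback {n : ℕ} (g : Pt n → Fin n → Fin n → ℝ) (ψ : Pt n → Pt n) (q : Pt n) :
    Matrix (Fin n) (Fin n) ℝ :=
  (jac ψ q)ᵀ * Matrix.of (g (ψ q)) * jac ψ q

/-- The 3-dimensional plane-wave metric `dv(2du − (α''(v)/α(v))x² dv) + dx²`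
in coordinates `(u,v,x) = (q 0, q 1, q 2)`. -/
def planeWaveM (α : ℝ → ℝ) (q : Pt 3) : Matrix (Fin 3) (Fin 3) ℝ :=
  Matrix.of fun i j =>
    if i = 0 ∧ j = 1 then 1 else if i = 1 ∧ j = 0 then 1
    else if i = 1 ∧ j = 1 then -(deriv (deriv α) (q 1) / α (q 1)) * (q 2)^2
    else if i = 2 ∧ j = 2 then 1 else 0



section Infra
open scoped ContDiff Topology

lemma sm_diffAt {n : ℕ} {B : Set (Pt n)} (hB : IsOpen B) {f : Pt n → ℝ} (hf : ContDiffOn ℝ ∞ f B)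
    {p : Pt n} (hp : p ∈ B) : DifferentiableAt ℝ f p :=
  ((hf.contDiffAt (hB.mem_nhds hp)).differentiableAt (by simp))

lemma sm_pd {n : ℕ} {B : Set (Pt n)} (hB : IsOpen B) {f : Pt n → ℝ} (hf : ContDiffOn ℝ ∞ f B)
    (i : Fin n) : ContDiffOn ℝ ∞ (pd i f) B := by
  have h1 := ((contDiffOn_infty_iff_fderiv_of_isOpen hB).1 hf).2
  exact h1.clm_apply contDiffOn_const

lemma pd_congr {n : ℕ} {B : Set (Pt n)} (hB : IsOpen B) {f f' : Pt n → ℝ}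
    (h : ∀ q ∈ B, f q = f' q) {p : Pt n} (hp : p ∈ B) (i : Fin n) : pd i f p = pd i f' p := by
  unfold pd
  have : f =ᶠ[𝓝 p] f' := by
    filter_upwards [hB.mem_nhds hp] with q hq using h q hq
  rw [this.fderiv_eq]

lemma pd_add {n : ℕ} {f f' : Pt n → ℝ} {p : Pt n} (hf : DifferentiableAt ℝ f p)
    (hf' : DifferentiableAt ℝ f' p) (i : Fin n) :
    pd i (fun q => f q + f' q) p = pd i f p + pd i f' p := by
  simp [pd, fderiv_fun_add hf hf']

lemma pd_sub {n : ℕ} {f f' : Pt n → ℝ} {p : Pt n} (hf : DifferentiableAt ℝ f p)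
    (hf' : DifferentiableAt ℝ f' p) (i : Fin n) :
    pd i (fun q => f q - f' q) p = pd i f p - pd i f' p := by
  simp [pd, fderiv_fun_sub hf hf']

lemma pd_neg {n : ℕ} {f : Pt n → ℝ} {p : Pt n} (i : Fin n) :
    pd i (fun q => - f q) p = - pd i f p := by
  simp [pd, fderiv_fun_neg]

lemma pd_mul {n : ℕ} {f f' : Pt n → ℝ} {p : Pt n} (hf : DifferentiableAt ℝ f p)
    (hf' : DifferentiableAt ℝ f' p) (i : Fin n) :
    pd i (fun q => f q * f' q) p = pd i f p * f' p + f p * pd i f' p := by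
  simp [pd, fderiv_fun_mul hf hf']; ring

lemma pd_const {n : ℕ} (c : ℝ) {p : Pt n} (i : Fin n) :
    pd i (fun _ => c) p = 0 := by
  simp [pd]

lemma pd_comp {n : ℕ} {φ : ℝ → ℝ} {v : Pt n → ℝ} {p : Pt n} (hφ : DifferentiableAt ℝ φ (v p))
    (hv : DifferentiableAt ℝ v p) (i : Fin n) :
    pd i (fun q => φ (v q)) p = deriv φ (v p) * pd i v p := by
  have := (hφ.hasDerivAt.comp_hasFDerivAt p hv.hasFDerivAt).fderiv
  have h2 : fderiv ℝ (fun q => φ (v q)) p = deriv φ (v p) • fderiv ℝ v p := this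
  simp [pd, h2]

lemma fderiv_eq_pd {n : ℕ} (f : Pt n → ℝ) (p w : Pt n) :
    fderiv ℝ f p w = ∑ i, w i * pd i f p := by
  conv_lhs => rw [pi_eq_sum_univ' w]
  simp only [map_sum, map_smul, smul_eq_mul, pd]

lemma pd_comm {n : ℕ} {B : Set (Pt n)} (hB : IsOpen B) {f : Pt n → ℝ} (hf : ContDiffOn ℝ ∞ f B)
    {p : Pt n} (hp : p ∈ B) (i j : Fin n) : pd i (pd j f) p = pd j (pd i f) p := by
  have hc := hf.contDiffAt (hB.mem_nhds hp)
  have hs : IsSymmSndFDerivAt ℝ f p := hc.isSymmSndFDerivAt (by simp; exact WithTop.coe_le_coe.2 (le_top (a := (2 : ℕ∞))))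
  have hd : DifferentiableAt ℝ (fderiv ℝ f) p := by
    have h1 := ((contDiffOn_infty_iff_fderiv_of_isOpen hB).1 hf).2
    exact (h1.contDiffAt (hB.mem_nhds hp)).differentiableAt (by simp)
  have key : ∀ i j : Fin n, pd i (pd j f) p
      = fderiv ℝ (fderiv ℝ f) p (Pi.single i 1) (Pi.single j 1) := by
    intro i j
    unfold pd
    rw [fderiv_clm_apply hd (by fun_prop)]
    simp
  rw [key, key]
  exact hs _ _

/-- Poincaré lemma for 1-forms on convex open sets, in components. -/
lemma poincare {n : ℕ} {B : Set (Pt n)} (hB : IsOpen B) (hc : Convex ℝ B) (w : Fin n → Pt n → ℝ)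
    (hw : ∀ i, ContDiffOn ℝ ∞ (w i) B)
    (hcl : ∀ p ∈ B, ∀ i j, pd i (w j) p = pd j (w i) p) :
    ∃ F : Pt n → ℝ, ContDiffOn ℝ ∞ F B ∧ ∀ p ∈ B, ∀ i, pd i F p = w i p := by
  let W : Pt n → (Pt n →L[ℝ] ℝ) := fun p => ∑ i, w i p • ContinuousLinearMap.proj (R := ℝ) i
  have hWs : ContDiffOn ℝ ∞ W B := by
    apply ContDiffOn.sum
    intro i _
    exact (hw i).smul contDiffOn_const
  have hWd : ∀ p ∈ B, fderiv ℝ W p = ∑ i, (fderiv ℝ (w i) p).smulRight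
      (ContinuousLinearMap.proj (R := ℝ) i) := by
    intro p hp
    have : HasFDerivAt W (∑ i, (fderiv ℝ (w i) p).smulRight
      (ContinuousLinearMap.proj (R := ℝ) (φ := fun _ : Fin n => ℝ) i)) p := by
      apply HasFDerivAt.fun_sum
      intro i _
      exact (sm_diffAt hB (hw i) hp).hasFDerivAt.smul_const
        (ContinuousLinearMap.proj (R := ℝ) (φ := fun _ : Fin n => ℝ) i)
    exact this.fderiv
  obtain ⟨F, hF⟩ := hc.exists_forall_hasFDerivAt_of_fderiv_symmetric hB
    (hWs.differentiableOn (by simp)) (by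
      intro p hp x y
      rw [hWd p hp]
      simp only [_root_.sum_apply, ContinuousLinearMap.smulRight_apply,
        _root_.smul_apply, ContinuousLinearMap.proj_apply, smul_eq_mul, fderiv_eq_pd]
      simp only [Finset.sum_mul]
      rw [Finset.sum_comm]
      refine Finset.sum_congr rfl fun i _ => Finset.sum_congr rfl fun j _ => ?_
      rw [hcl p hp i j]; ring)
  refine ⟨F, ?_, ?_⟩
  · rw [contDiffOn_infty_iff_fderiv_of_isOpen hB]
    refine ⟨fun p hp => (hF p hp).differentiableAt.differentiableWithinAt, ?_⟩
    exact hWs.congr fun p hp => (hF p hp).fderiv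
  · intro p hp i
    simp only [pd, (hF p hp).fderiv, W, _root_.sum_apply,
        _root_.smul_apply, ContinuousLinearMap.proj_apply, smul_eq_mul]
    simp [Pi.single_apply]

end Infra

section Analysis
open scoped ContDiff Topology

lemma inv_fn {n : ℕ} {B : Set (Pt n)} (hB : IsOpen B) {Φ : Pt n → Pt n} (hΦ : ContDiffOn ℝ ∞ Φ B)
    {p : Pt n} (hp : p ∈ B) (e' : Pt n ≃L[ℝ] Pt n) (he : HasFDerivAt Φ (e' : Pt n →L[ℝ] Pt n) p) :
    ∃ r > 0, ∃ Ψ : Pt n → Pt n, ContDiffOn ℝ ∞ Ψ (Metric.ball (Φ p) r) ∧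
      (∀ y ∈ Metric.ball (Φ p) r, Ψ y ∈ B ∧ Φ (Ψ y) = y) ∧ Ψ (Φ p) = p ∧
      ∀ᶠ q in 𝓝 p, Φ q ∈ Metric.ball (Φ p) r ∧ Ψ (Φ q) = q := by
  have hc : ContDiffAt ℝ ∞ Φ p := hΦ.contDiffAt (hB.mem_nhds hp)
  have hn : (∞ : WithTop ℕ∞) ≠ 0 := by simp
  set E := hc.toOpenPartialHomeomorph Φ he hn with hE
  have hEc : (E : Pt n → Pt n) = Φ := hc.toOpenPartialHomeomorph_coe he hn
  have hps : p ∈ E.source := hc.mem_toOpenPartialHomeomorph_source he hn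
  have hpt : Φ p ∈ E.target := hc.image_mem_toOpenPartialHomeomorph_target he hn
  have hEp : E.symm (Φ p) = p := by
    have := E.left_inv hps
    rwa [hEc] at this
  have hfc : ContinuousAt (fderiv ℝ Φ) p :=
    (((contDiffOn_infty_iff_fderiv_of_isOpen hB).1 hΦ).2.contDiffAt (hB.mem_nhds hp)).continuousAt
  have hinv : ∀ᶠ q in 𝓝 p, q ∈ B ∧ fderiv ℝ Φ q ∈
      Set.range ((↑) : (Pt n ≃L[ℝ] Pt n) → (Pt n →L[ℝ] Pt n)) := by
    have hB' : ∀ᶠ q in 𝓝 p, q ∈ B := hB.mem_nhds hp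
    have h2 : Set.range ((↑) : (Pt n ≃L[ℝ] Pt n) → (Pt n →L[ℝ] Pt n)) ∈ 𝓝 (fderiv ℝ Φ p) := by
      rw [he.fderiv]
      exact ContinuousLinearEquiv.nhds e'
    exact hB'.and (hfc.eventually h2)
  have hsc : ContinuousAt E.symm (Φ p) := E.continuousAt_symm hpt
  have hev : ∀ᶠ y in 𝓝 (Φ p), y ∈ E.target ∧ (E.symm y ∈ B ∧ fderiv ℝ Φ (E.symm y) ∈
      Set.range ((↑) : (Pt n ≃L[ℝ] Pt n) → (Pt n →L[ℝ] Pt n))) := by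
    have hB' : ∀ᶠ y in 𝓝 (Φ p), y ∈ E.target := E.open_target.mem_nhds hpt
    rw [← hEp] at hinv
    exact hB'.and (hsc.eventually hinv)
  obtain ⟨r, hr, hball⟩ := Metric.eventually_nhds_iff_ball.1 hev
  refine ⟨r, hr, E.symm, ?_, ?_, hEp, ?_⟩
  · intro y hy
    obtain ⟨hyt, hyB, f', hf'⟩ := hball y hy
    refine (E.contDiffAt_symm (f₀' := f') hyt ?_ ?_).contDiffWithinAt
    · rw [hEc, hf']
      exact ((hΦ.contDiffAt (hB.mem_nhds hyB)).differentiableAt hn).hasFDerivAt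
    · rw [hEc]
      exact hΦ.contDiffAt (hB.mem_nhds hyB)
  · intro y hy
    obtain ⟨hyt, hyB, -⟩ := hball y hy
    refine ⟨hyB, ?_⟩
    have := E.right_inv hyt
    rwa [hEc] at this
  · have h1 : ∀ᶠ q in 𝓝 p, Φ q ∈ Metric.ball (Φ p) r :=
      hc.continuousAt.eventually (Metric.ball_mem_nhds _ hr)
    filter_upwards [h1, E.open_source.mem_nhds hps] with q hq hqs
    refine ⟨hq, ?_⟩
    have := E.left_inv hqs
    rwa [hEc] at this

/-- extension of a germ of a smooth function on the line -/
lemma extend_germ (f : ℝ → ℝ) (a r : ℝ) (hr : 0 < r) (hf : ContDiffOn ℝ ∞ f (Metric.ball a r)) :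
    ∃ F : ℝ → ℝ, ContDiff ℝ ∞ F ∧ ∀ᶠ t in 𝓝 a, F t = f t := by
  let b : ContDiffBump a := ⟨r/4, r/2, by positivity, by linarith⟩
  refine ⟨fun t => b t * f t, ?_, ?_⟩
  · rw [contDiff_iff_contDiffAt]
    intro t
    by_cases ht : t ∈ Metric.ball a r
    · exact b.contDiff.contDiffAt.mul (hf.contDiffAt (Metric.isOpen_ball.mem_nhds ht))
    · have : (fun t => b t * f t) =ᶠ[𝓝 t] fun _ => 0 := by
        have hc : t ∈ (Metric.closedBall a (r/2))ᶜ := by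
          simp only [Metric.mem_ball, not_lt] at ht
          simp only [Set.mem_compl_iff, Metric.mem_closedBall, not_le]
          linarith
        filter_upwards [Metric.isClosed_closedBall.isOpen_compl.mem_nhds hc] with s hs
        have : b s = 0 := by
          apply b.zero_of_le_dist
          simp only [Set.mem_compl_iff, Metric.mem_closedBall, not_le] at hs
          exact hs.le
        simp [this]
      exact contDiffAt_const.congr_of_eventuallyEq this
  · filter_upwards [Metric.closedBall_mem_nhds a (show 0 < r/4 by positivity)] with t ht
    rw [b.one_of_mem_closedBall ht, one_mul]

lemma fov {n : ℕ} {B : Set (Pt n)} (hB : IsOpen B) {v h c : Pt n → ℝ} (hv : ContDiffOn ℝ ∞ v B)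
    (hh : ContDiffOn ℝ ∞ h B) {p : Pt n} (hp : p ∈ B)
    (hc : ∀ q ∈ B, ∀ i, pd i h q = c q * pd i v q) (i : Fin n) (hi : pd i v p ≠ 0) :
    ∃ α : ℝ → ℝ, ContDiff ℝ ∞ α ∧ ∀ᶠ q in 𝓝 p, h q = α (v q) := by
  set L := fderiv ℝ v p with hL
  set w : Pt n := (pd i v p)⁻¹ • Pi.single i 1 with hw
  have hLw : L w = 1 := by
    rw [hw, map_smul]
    exact inv_mul_cancel₀ hi
  let Φ : Pt n → Pt n := fun q => q + (v q - v p - L (q - p)) • w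
  have hΦ : ContDiffOn ℝ ∞ Φ B := by
    apply contDiffOn_id.add
    refine ContDiffOn.smul (f := fun q => v q - v p - L (q - p)) ?_ contDiffOn_const
    exact (hv.sub contDiffOn_const).sub (L.contDiff.comp (contDiff_id.sub contDiff_const)).contDiffOn
  have hd : HasFDerivAt Φ ((ContinuousLinearEquiv.refl ℝ (Pt n) : Pt n ≃L[ℝ] Pt n) : Pt n →L[ℝ] Pt n) p := by
    have h1 : HasFDerivAt v L p := (sm_diffAt hB hv hp).hasFDerivAt
    have h2 : HasFDerivAt (fun q => L (q - p)) L p := by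
      exact L.hasFDerivAt.comp p ((hasFDerivAt_id p).sub_const p)
    have h3 := (hasFDerivAt_id p).add (((h1.sub_const (v p)).sub h2).smul_const w)
    have h4 : ContinuousLinearMap.id ℝ (Pt n) + (L - L).smulRight w
      = ((ContinuousLinearEquiv.refl ℝ (Pt n) : Pt n ≃L[ℝ] Pt n) : Pt n →L[ℝ] Pt n) := by
      ext; simp
    rw [← h4]
    exact h3
  have hΦp : Φ p = p := by simp [Φ]
  obtain ⟨r, hr, Ψ, hΨ, hinv, hΨp, hev⟩ := inv_fn hB hΦ hp _ hd
  rw [hΦp] at hΨ hinv hΨp hev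
  have hvΨ : ∀ y ∈ Metric.ball p r, v (Ψ y) = v p + L (y - p) := by
    intro y hy
    have h1 := (hinv y hy).2
    have h2 : L (Φ (Ψ y)) = L y := by rw [h1]
    simp only [Φ, map_add, map_smul, hLw, smul_eq_mul, map_sub] at h2 ⊢
    linarith
  have hHs : ContDiffOn ℝ ∞ (fun y => h (Ψ y)) (Metric.ball p r) :=
    hh.comp hΨ fun y hy => (hinv y hy).1
  have hHd : ∀ y ∈ Metric.ball p r, HasFDerivAt (fun y => h (Ψ y)) (c (Ψ y) • L) y := by
    intro y hy
    have hyB := (hinv y hy).1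
    have hΨd : HasFDerivAt Ψ (fderiv ℝ Ψ y) y :=
      ((hΨ.contDiffAt (Metric.isOpen_ball.mem_nhds hy)).differentiableAt (by simp)).hasFDerivAt
    have h1 := (sm_diffAt hB hh hyB).hasFDerivAt.comp y hΨd
    have h2 := (sm_diffAt hB hv hyB).hasFDerivAt.comp y hΨd
    have h3 : fderiv ℝ h (Ψ y) = c (Ψ y) • fderiv ℝ v (Ψ y) := by
      ext z
      simp only [_root_.smul_apply, fderiv_eq_pd, hc _ hyB, smul_eq_mul, Finset.mul_sum]
      refine Finset.sum_congr rfl fun i _ => ?_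
      ring
    have h4 : HasFDerivAt (fun y => v (Ψ y)) L y := by
      have : HasFDerivAt (fun y => v p + L (y - p)) L y := by
        exact (L.hasFDerivAt.comp y ((hasFDerivAt_id y).sub_const p)).const_add (v p)
      refine this.congr_of_eventuallyEq ?_
      filter_upwards [Metric.isOpen_ball.mem_nhds hy] with z hz using hvΨ z hz
    have h5 := h2.unique h4
    rw [h3] at h1
    have h6 : (c (Ψ y) • fderiv ℝ v (Ψ y)).comp (fderiv ℝ Ψ y) = c (Ψ y) • L := by
      rw [← h5]; ext z; simp
    rw [h6] at h1
    exact h1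
  -- the function on the line
  let γ : ℝ → Pt n := fun s => p + (s - v p) • w
  have hγ : ContDiff ℝ ∞ γ := by
    exact contDiff_const.add ((contDiff_id.sub contDiff_const).smul contDiff_const)
  have hγp : γ (v p) = p := by simp [γ]
  have hγball : ∀ᶠ s in 𝓝 (v p), γ s ∈ Metric.ball p r := by
    have := hγ.continuous.continuousAt (x := v p)
    apply this.eventually
    rw [hγp]; exact Metric.ball_mem_nhds _ hr
  obtain ⟨r', hr', hb'⟩ := Metric.eventually_nhds_iff_ball.1 hγball
  obtain ⟨α, hα, hαe⟩ := extend_germ (fun s => h (Ψ (γ s))) (v p) r' hr'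
    (hHs.comp hγ.contDiffOn fun s hs => hb' s hs)
  refine ⟨α, hα, ?_⟩
  have hvc : ContinuousAt v p := (sm_diffAt hB hv hp).continuousAt
  have hΦc : ContinuousAt Φ p := hd.continuousAt
  filter_upwards [hev, hvc.eventually hαe, hvc.eventually hγball] with q hq1 hq2 hq3
  rw [hq2]
  obtain ⟨hqb, hqi⟩ := hq1
  set y := Φ q with hy
  have hvq : v q = v p + L (y - p) := by rw [← hvΨ y hqb, hqi]
  conv_lhs => rw [← hqi]
  have hz : L (y - γ (v q)) = 0 := by
    simp only [γ, map_sub, map_add, map_smul, hLw, smul_eq_mul] at hvq ⊢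
    linarith
  -- one-dimensional argument along the segment
  set z := γ (v q) with hzdef
  have hseg : ∀ t ∈ Set.Icc (0:ℝ) 1, AffineMap.lineMap z y t ∈ Metric.ball p r := fun t ht =>
    (convex_ball p r).segment_subset hq3 hqb (by
      rw [segment_eq_image_lineMap]; exact ⟨t, ht, rfl⟩)
  have hder : ∀ t ∈ Set.Icc (0:ℝ) 1, HasDerivAt (fun t : ℝ => h (Ψ (AffineMap.lineMap z y t))) 0 t := by
    intro t ht
    have h1 := (hHd _ (hseg t ht)).comp_hasDerivAt t (AffineMap.hasDerivAt_lineMap (a := z) (b := y))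
    have : (c (Ψ (AffineMap.lineMap z y t)) • L) (y - z) = 0 := by
      simp [hz]
    rw [this] at h1
    exact h1
  have := constant_of_derivWithin_zero (f := fun t : ℝ => h (Ψ (AffineMap.lineMap z y t))) (a := 0) (b := 1)
    (fun t ht => (hder t ht).differentiableAt.differentiableWithinAt)
    (fun t ht => by
      have ht' : t ∈ Set.Icc (0:ℝ) 1 := ⟨ht.1, ht.2.le⟩
      exact (hder t ht').hasDerivWithinAt.derivWithin (uniqueDiffOn_Icc zero_lt_one t ht'))
    1 (by simp)
  simpa using this

end Analysis

section ODE
open scoped ContDiff Topology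

lemma const_on_ball {f : ℝ → ℝ} {a r : ℝ} (hf : ∀ t ∈ Metric.ball a r, HasDerivAt f 0 t) :
    ∀ t ∈ Metric.ball a r, f t = f a := by
  intro t ht
  have hr : 0 < r := lt_of_le_of_lt dist_nonneg ht
  refine Metric.isOpen_ball.is_const_of_deriv_eq_zero (convex_ball a r).isPreconnected
    (fun s hs => (hf s hs).differentiableAt.differentiableWithinAt)
    (fun s hs => (hf s hs).deriv) ht (Metric.mem_ball_self hr)

lemma ode_one (K : ℝ → ℝ) (hK : ContDiff ℝ ∞ K) (t₀ y₀ z₀ : ℝ) :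
    ∃ r > 0, ∃ y z : ℝ → ℝ, y t₀ = y₀ ∧ z t₀ = z₀ ∧
      ∀ t ∈ Metric.ball t₀ r, HasDerivAt y (z t) t ∧ HasDerivAt z (K t * y t) t := by
  let f : ℝ × ℝ × ℝ → ℝ × ℝ × ℝ := fun x => (1, x.2.2, K x.1 * x.2.1)
  have hf : ContDiff ℝ 1 f := by
    have hK1 : ContDiff ℝ 1 K := hK.of_le (by exact WithTop.coe_le_coe.2 (le_top (a := (1 : ℕ∞))))
    have : ContDiff ℝ 1 (fun x : ℝ × ℝ × ℝ => K x.1) := hK1.comp contDiff_fst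
    fun_prop
  obtain ⟨φ, hφ0, r, hr, hφ⟩ :=
    (hf.contDiffAt (x := (t₀, y₀, z₀))).exists_forall_mem_closedBall_exists_eq_forall_mem_Ioo_hasDerivAt₀ t₀
  have hball : ∀ t ∈ Metric.ball t₀ r, HasDerivAt φ (f (φ t)) t := by
    intro t ht
    rw [Real.ball_eq_Ioo] at ht
    exact hφ t ht
  have h1 : ∀ t ∈ Metric.ball t₀ r, HasDerivAt (fun t => (φ t).1) 1 t := fun t ht =>
    (hasFDerivAt_fst (𝕜 := ℝ) (p := φ t)).comp_hasDerivAt t (hball t ht)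
  have h2 : ∀ t ∈ Metric.ball t₀ r, HasDerivAt (fun t => (φ t).2) (f (φ t)).2 t := fun t ht =>
    (hasFDerivAt_snd (𝕜 := ℝ) (p := φ t)).comp_hasDerivAt t (hball t ht)
  have h3 : ∀ t ∈ Metric.ball t₀ r, (φ t).1 = t := by
    intro t ht
    have := const_on_ball (f := fun t => (φ t).1 - t) (a := t₀) (r := r) (fun s hs => by
      have h0 := (h1 s hs).sub (hasDerivAt_id s)
      rw [sub_self] at h0
      exact h0) t ht
    simp only [hφ0, sub_self] at this
    linarith
  refine ⟨r, hr, fun t => (φ t).2.1, fun t => (φ t).2.2, by simp [hφ0], by simp [hφ0], ?_⟩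
  intro t ht
  have h4 := (hasFDerivAt_fst (𝕜 := ℝ) (p := (φ t).2)).comp_hasDerivAt t (h2 t ht)
  refine ⟨h4, ?_⟩
  have := (hasFDerivAt_snd (𝕜 := ℝ) (p := (φ t).2)).comp_hasDerivAt t (h2 t ht)
  rw [show K t = K (φ t).1 by rw [h3 t ht]]
  exact this

lemma ode_smooth (K : ℝ → ℝ) (hK : ContDiff ℝ ∞ K) (t₀ r : ℝ) (y z : ℝ → ℝ)
    (h : ∀ t ∈ Metric.ball t₀ r, HasDerivAt y (z t) t ∧ HasDerivAt z (K t * y t) t) :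
    ContDiffOn ℝ ∞ y (Metric.ball t₀ r) ∧ ContDiffOn ℝ ∞ z (Metric.ball t₀ r) := by
  have key : ∀ n : ℕ, ContDiffOn ℝ n y (Metric.ball t₀ r) ∧ ContDiffOn ℝ n z (Metric.ball t₀ r) := by
    intro n
    induction n with
    | zero =>
      simp only [Nat.cast_zero, contDiffOn_zero]
      exact ⟨fun t ht => (h t ht).1.continuousAt.continuousWithinAt,
        fun t ht => (h t ht).2.continuousAt.continuousWithinAt⟩
    | succ n ih =>
      have hKn : ContDiff ℝ n K := hK.of_le (by exact_mod_cast le_top)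
      constructor
      · rw [Nat.cast_add, Nat.cast_one, contDiffOn_succ_iff_deriv_of_isOpen Metric.isOpen_ball]
        exact ⟨fun t ht => (h t ht).1.differentiableAt.differentiableWithinAt, by simp,
          ih.2.congr fun t ht => (h t ht).1.deriv⟩
      · rw [Nat.cast_add, Nat.cast_one, contDiffOn_succ_iff_deriv_of_isOpen Metric.isOpen_ball]
        exact ⟨fun t ht => (h t ht).2.differentiableAt.differentiableWithinAt, by simp,
          (hKn.contDiffOn.mul ih.1).congr fun t ht => (h t ht).2.deriv⟩
  exact ⟨contDiffOn_infty.2 fun n => (key n).1, contDiffOn_infty.2 fun n => (key n).2⟩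

lemma ode_pair (K : ℝ → ℝ) (hK : ContDiff ℝ ∞ K) (t₀ : ℝ) :
    ∃ r > 0, ∃ y₁ z₁ y₂ z₂ : ℝ → ℝ,
      (ContDiffOn ℝ ∞ y₁ (Metric.ball t₀ r) ∧ ContDiffOn ℝ ∞ z₁ (Metric.ball t₀ r)) ∧
      (ContDiffOn ℝ ∞ y₂ (Metric.ball t₀ r) ∧ ContDiffOn ℝ ∞ z₂ (Metric.ball t₀ r)) ∧
      ∀ t ∈ Metric.ball t₀ r, (HasDerivAt y₁ (z₁ t) t ∧ HasDerivAt z₁ (K t * y₁ t) t) ∧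
        (HasDerivAt y₂ (z₂ t) t ∧ HasDerivAt z₂ (K t * y₂ t) t) ∧
        y₁ t * z₂ t - y₂ t * z₁ t = 1 := by
  obtain ⟨r, hr, y, z, hy, hz, h⟩ := ode_one K hK t₀ 1 0
  obtain ⟨r', hr', y', z', hy', hz', h'⟩ := ode_one K hK t₀ 0 1
  have hm : 0 < min r r' := lt_min hr hr'
  have a : ∀ t ∈ Metric.ball t₀ (min r r'), HasDerivAt y (z t) t ∧ HasDerivAt z (K t * y t) t :=
    fun t ht => h t (Metric.ball_subset_ball (min_le_left _ _) ht)
  have a' : ∀ t ∈ Metric.ball t₀ (min r r'), HasDerivAt y' (z' t) t ∧ HasDerivAt z' (K t * y' t) t :=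
    fun t ht => h' t (Metric.ball_subset_ball (min_le_right _ _) ht)
  refine ⟨min r r', hm, y, z, y', z', ode_smooth K hK _ _ _ _ a, ode_smooth K hK _ _ _ _ a', ?_⟩
  intro t ht
  refine ⟨a t ht, a' t ht, ?_⟩
  have := const_on_ball (f := fun t => y t * z' t - y' t * z t) (a := t₀) (r := min r r')
    (fun s hs => by
      have h1 := ((a s hs).1.mul (a' s hs).2).sub ((a' s hs).1.mul (a s hs).2)
      have h0 : z s * z' s + y s * (K s * y' s) - (z' s * z s + y' s * (K s * y s)) = 0 := by ring
      rw [h0] at h1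
      exact h1) t ht
  simpa [hy, hz, hy', hz'] using this

end ODE

section Stage2
open scoped ContDiff Topology

/-- metric `2 du dv + k x² dv² + dx²` -/
def pwK (K : ℝ → ℝ) (q : Pt 3) : Matrix (Fin 3) (Fin 3) ℝ :=
  !![0, 1, 0; 1, K (q 1) * (q 2)^2, 0; 0, 0, 1]

lemma jac_hasFDerivAt {n : ℕ} {Φ : Pt n → Pt n} {p : Pt n} (h : ∀ i, DifferentiableAt ℝ (fun q => Φ q i) p) :
    HasFDerivAt Φ (Matrix.toLin' (jac Φ p)).toContinuousLinearMap p := by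
  rw [hasFDerivAt_pi']
  intro i
  refine (h i).hasFDerivAt.congr_fderiv ?_
  refine ContinuousLinearMap.ext fun z => ?_
  rw [fderiv_eq_pd]
  simp [jac, Matrix.toLin'_apply, Matrix.mulVec, dotProduct, mul_comm]

lemma coords_of_functions {B : Set (Pt 3)} (hB : IsOpen B) {p : Pt 3} (hp : p ∈ B)
    (g : Pt 3 → Fin 3 → Fin 3 → ℝ) (K : ℝ → ℝ) (Ξ : Pt 3 → Pt 3)
    (hΞ : ∀ i, ContDiffOn ℝ ∞ (fun q => Ξ q i) B)
    (hdet : (Matrix.of (g p)).det ≠ 0)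
    (hg : ∀ q ∈ B, Matrix.of (g q) = (jac Ξ q)ᵀ * pwK K (Ξ q) * jac Ξ q) :
    ∃ (U : Set (Pt 3)) (ψ : Pt 3 → Pt 3), IsOpen U ∧ ContDiffOn ℝ (⊤ : ℕ∞) ψ U ∧ Set.InjOn ψ U ∧
      ψ '' U ⊆ B ∧ p ∈ ψ '' U ∧ ∀ q ∈ U, pullback g ψ q = pwK K q ∧ Ξ (ψ q) = q := by
  have hJ : IsUnit (jac Ξ p).det := by
    rw [isUnit_iff_ne_zero]
    intro h0
    apply hdet
    rw [hg p hp, Matrix.det_mul, h0, mul_zero]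
  have hd := fun q (hq : q ∈ B) => jac_hasFDerivAt (Φ := Ξ) fun i => sm_diffAt hB (hΞ i) hq
  let e' : Pt 3 ≃L[ℝ] Pt 3 :=
    (Matrix.toLin'OfInv (Matrix.nonsing_inv_mul _ hJ) (Matrix.mul_nonsing_inv _ hJ)).toContinuousLinearEquiv
  have hd' : HasFDerivAt Ξ (e' : Pt 3 →L[ℝ] Pt 3) p := by
    refine (hd p hp).congr_fderiv ?_
    refine ContinuousLinearMap.ext fun z => ?_
    rfl
  have hΞs : ContDiffOn ℝ ∞ Ξ B := contDiffOn_pi.2 hΞ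
  obtain ⟨r, hr, Ψ, hΨ, hinv, hΨp, -⟩ := inv_fn hB hΞs hp e' hd'
  refine ⟨Metric.ball (Ξ p) r, Ψ, Metric.isOpen_ball, hΨ, ?_, ?_, ?_, ?_⟩
  · intro a ha b hb hab
    rw [← (hinv a ha).2, ← (hinv b hb).2, hab]
  · rintro _ ⟨y, hy, rfl⟩
    exact (hinv y hy).1
  · exact ⟨Ξ p, Metric.mem_ball_self hr, hΨp⟩
  · intro y hy
    refine ⟨?_, (hinv y hy).2⟩
    have hΨd : ∀ i, DifferentiableAt ℝ (fun y => Ψ y i) y := fun i =>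
      sm_diffAt Metric.isOpen_ball (contDiffOn_pi.1 hΨ i) hy
    have h1 := (hd _ (hinv y hy).1).comp y (jac_hasFDerivAt hΨd)
    have h2 : HasFDerivAt (Ξ ∘ Ψ) (ContinuousLinearMap.id ℝ (Pt 3)) y := by
      refine (hasFDerivAt_id y).congr_of_eventuallyEq ?_
      filter_upwards [Metric.isOpen_ball.mem_nhds hy] with z hz using (hinv z hz).2
    have h3 := h1.unique h2
    have h4 : jac Ξ (Ψ y) * jac Ψ y = 1 := by
      apply Matrix.toLin'.injective
      rw [Matrix.toLin'_mul, Matrix.toLin'_one]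
      refine LinearMap.ext fun z => ?_
      have := congrArg (fun L : Pt 3 →L[ℝ] Pt 3 => L z) h3
      exact this
    unfold pullback
    rw [hg _ (hinv y hy).1, (hinv y hy).2]
    calc (jac Ψ y)ᵀ * ((jac Ξ (Ψ y))ᵀ * pwK K y * jac Ξ (Ψ y)) * jac Ψ y
        = (jac Ξ (Ψ y) * jac Ψ y)ᵀ * pwK K y * (jac Ξ (Ψ y) * jac Ψ y) := by
          rw [Matrix.transpose_mul]; simp only [Matrix.mul_assoc]
      _ = pwK K y := by rw [h4]; simp

lemma stage2 {B₀ : Set (Pt 3)} (hB₀ : IsOpen B₀) {p : Pt 3} (hp : p ∈ B₀)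
    (g : Pt 3 → Fin 3 → Fin 3 → ℝ) (K : ℝ → ℝ) (hK : ContDiff ℝ ∞ K) (v : Pt 3 → ℝ)
    (ε l b : Fin 3 → Pt 3 → ℝ) (hv : ContDiffOn ℝ ∞ v B₀)
    (hε : ∀ i, ContDiffOn ℝ ∞ (ε i) B₀) (hl : ∀ i, ContDiffOn ℝ ∞ (l i) B₀)
    (hb : ∀ i, ContDiffOn ℝ ∞ (b i) B₀)
    (dε : ∀ q ∈ B₀, ∀ i j, pd i (ε j) q - pd j (ε i) q = b i q * pd j v q - b j q * pd i v q)
    (dl : ∀ q ∈ B₀, ∀ i j, pd i (l j) q - pd j (l i) q = -(b i q * ε j q - b j q * ε i q))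
    (db : ∀ q ∈ B₀, ∀ i j, pd i (b j) q - pd j (b i) q
      = K (v q) * (ε i q * pd j v q - ε j q * pd i v q))
    (hg : ∀ q ∈ B₀, ∀ i j, g q i j = pd i v q * l j q + l i q * pd j v q + ε i q * ε j q)
    (hdet : (Matrix.of (g p)).det ≠ 0) :
    ∃ (U : Set (Pt 3)) (ψ : Pt 3 → Pt 3), IsOpen U ∧ ContDiffOn ℝ (⊤ : ℕ∞) ψ U ∧ Set.InjOn ψ U ∧
      ψ '' U ⊆ B₀ ∧ p ∈ ψ '' U ∧ ∀ q ∈ U, pullback g ψ q = pwK K q ∧ v (ψ q) = q 1 := by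
  obtain ⟨r, hr, y₁, z₁, y₂, z₂, ⟨hy₁, hz₁⟩, ⟨hy₂, hz₂⟩, hode⟩ := ode_pair K hK (v p)
  have hvc : ContinuousAt v p := (sm_diffAt hB₀ hv hp).continuousAt
  have hev : ∀ᶠ q in 𝓝 p, v q ∈ Metric.ball (v p) r ∧ q ∈ B₀ :=
    (hvc.eventually (Metric.ball_mem_nhds _ hr)).and (hB₀.mem_nhds hp)
  obtain ⟨ρ, hρ, hball⟩ := Metric.eventually_nhds_iff_ball.1 hev
  set B := Metric.ball p ρ with hBdef
  have hB : IsOpen B := Metric.isOpen_ball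
  have hBc : Convex ℝ B := convex_ball p ρ
  have hpB : p ∈ B := Metric.mem_ball_self hρ
  have hBB : B ⊆ B₀ := fun q hq => (hball q hq).2
  have hvB : ∀ q ∈ B, v q ∈ Metric.ball (v p) r := fun q hq => (hball q hq).1
  replace hv := hv.mono hBB
  replace hε := fun i => (hε i).mono hBB
  replace hl := fun i => (hl i).mono hBB
  replace hb := fun i => (hb i).mono hBB
  have hn := fun i => sm_pd hB hv i
  -- composed functions
  obtain ⟨Y₁, hY₁⟩ : ∃ Y : Pt 3 → ℝ, Y = fun q => y₁ (v q) := ⟨_, rfl⟩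
  obtain ⟨Y₂, hY₂⟩ : ∃ Y : Pt 3 → ℝ, Y = fun q => y₂ (v q) := ⟨_, rfl⟩
  obtain ⟨Z₁, hZ₁⟩ : ∃ Y : Pt 3 → ℝ, Y = fun q => z₁ (v q) := ⟨_, rfl⟩
  obtain ⟨Z₂, hZ₂⟩ : ∃ Y : Pt 3 → ℝ, Y = fun q => z₂ (v q) := ⟨_, rfl⟩
  obtain ⟨k, hk⟩ : ∃ Y : Pt 3 → ℝ, Y = fun q => K (v q) := ⟨_, rfl⟩
  have sY₁ : ContDiffOn ℝ ∞ Y₁ B := by rw [hY₁]; exact hy₁.comp hv hvB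
  have sY₂ : ContDiffOn ℝ ∞ Y₂ B := by rw [hY₂]; exact hy₂.comp hv hvB
  have sZ₁ : ContDiffOn ℝ ∞ Z₁ B := by rw [hZ₁]; exact hz₁.comp hv hvB
  have sZ₂ : ContDiffOn ℝ ∞ Z₂ B := by rw [hZ₂]; exact hz₂.comp hv hvB
  have sk : ContDiffOn ℝ ∞ k B := by rw [hk]; exact hK.comp_contDiffOn hv
  have dY₁ : ∀ q ∈ B, ∀ i, pd i Y₁ q = Z₁ q * pd i v q := by
    intro q hq i
    have h0 := (hode _ (hvB q hq)).1.1
    rw [hY₁, hZ₁, pd_comp h0.differentiableAt (sm_diffAt hB hv hq), h0.deriv]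
  have dY₂ : ∀ q ∈ B, ∀ i, pd i Y₂ q = Z₂ q * pd i v q := by
    intro q hq i
    have h0 := (hode _ (hvB q hq)).2.1.1
    rw [hY₂, hZ₂, pd_comp h0.differentiableAt (sm_diffAt hB hv hq), h0.deriv]
  have dZ₁ : ∀ q ∈ B, ∀ i, pd i Z₁ q = k q * Y₁ q * pd i v q := by
    intro q hq i
    have h0 := (hode _ (hvB q hq)).1.2
    rw [hY₁, hZ₁, hk, pd_comp h0.differentiableAt (sm_diffAt hB hv hq), h0.deriv]
  have dZ₂ : ∀ q ∈ B, ∀ i, pd i Z₂ q = k q * Y₂ q * pd i v q := by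
    intro q hq i
    have h0 := (hode _ (hvB q hq)).2.1.2
    rw [hY₂, hZ₂, hk, pd_comp h0.differentiableAt (sm_diffAt hB hv hq), h0.deriv]
  have dk : ∀ q ∈ B, ∀ i, pd i k q = deriv K (v q) * pd i v q := by
    intro q hq i
    rw [hk, pd_comp (hK.differentiable (by simp) _) (sm_diffAt hB hv hq)]
  have wr : ∀ q ∈ B, Y₁ q * Z₂ q - Y₂ q * Z₁ q = 1 := by
    intro q hq
    have h0 := (hode _ (hvB q hq)).2.2
    rw [hY₁, hY₂, hZ₁, hZ₂]; exact h0
  have dn : ∀ q ∈ B, ∀ i j, pd i (pd j v) q = pd j (pd i v) q := fun q hq i j =>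
    pd_comm hB hv hq i j
  replace db : ∀ q ∈ B, ∀ i j, pd i (b j) q - pd j (b i) q
      = k q * (ε i q * pd j v q - ε j q * pd i v q) := by
    intro q hq i j
    rw [hk]; exact db q (hBB hq) i j
  -- closed forms
  have hform : ∀ Y Z : Pt 3 → ℝ, ContDiffOn ℝ ∞ Y B → ContDiffOn ℝ ∞ Z B →
      (∀ q ∈ B, ∀ i, pd i Y q = Z q * pd i v q) → (∀ q ∈ B, ∀ i, pd i Z q = k q * Y q * pd i v q) →
      ∃ w : Pt 3 → ℝ, ContDiffOn ℝ ∞ w B ∧ ∀ q ∈ B, ∀ i, pd i w q = Z q * ε i q + Y q * b i q := by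
    intro Y Z sY sZ dY dZ
    refine poincare hB hBc (fun i q => Z q * ε i q + Y q * b i q) (fun i =>
      (sZ.mul (hε i)).add (sY.mul (hb i))) ?_
    intro q hq i j
    have eY := sm_diffAt hB sY hq
    have eZ := sm_diffAt hB sZ hq
    have eε := fun i => sm_diffAt hB (hε i) hq
    have eb := fun i => sm_diffAt hB (hb i) hq
    simp (disch := fun_prop) only [pd_add, pd_mul, dY q hq, dZ q hq]
    linear_combination Z q * dε q (hBB hq) i j + Y q * db q hq i j
  obtain ⟨w₁, sw₁, dw₁⟩ := hform Y₁ Z₁ sY₁ sZ₁ dY₁ dZ₁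
  obtain ⟨w₂, sw₂, dw₂⟩ := hform Y₂ Z₂ sY₂ sZ₂ dY₂ dZ₂
  obtain ⟨x, hx⟩ : ∃ x : Pt 3 → ℝ, x = fun q => Y₁ q * w₂ q - Y₂ q * w₁ q := ⟨_, rfl⟩
  obtain ⟨s, hs⟩ : ∃ s : Pt 3 → ℝ, s = fun q => Z₁ q * w₂ q - Z₂ q * w₁ q := ⟨_, rfl⟩
  have sx : ContDiffOn ℝ ∞ x B := by rw [hx]; exact (sY₁.mul sw₂).sub (sY₂.mul sw₁)
  have ss : ContDiffOn ℝ ∞ s B := by rw [hs]; exact (sZ₁.mul sw₂).sub (sZ₂.mul sw₁)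
  have dx : ∀ q ∈ B, ∀ i, pd i x q = ε i q + s q * pd i v q := by
    intro q hq i
    have e1 := sm_diffAt hB sY₁ hq
    have e2 := sm_diffAt hB sY₂ hq
    have e3 := sm_diffAt hB sw₁ hq
    have e4 := sm_diffAt hB sw₂ hq
    rw [hx, hs]
    simp (disch := fun_prop) only [pd_sub, pd_mul, dY₁ q hq, dY₂ q hq, dw₁ q hq, dw₂ q hq]
    linear_combination ε i q * wr q hq
  have ds : ∀ q ∈ B, ∀ i, pd i s q = k q * x q * pd i v q - b i q := by
    intro q hq i
    have e1 := sm_diffAt hB sZ₁ hq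
    have e2 := sm_diffAt hB sZ₂ hq
    have e3 := sm_diffAt hB sw₁ hq
    have e4 := sm_diffAt hB sw₂ hq
    rw [hx, hs]
    simp (disch := fun_prop) only [pd_sub, pd_mul, dZ₁ q hq, dZ₂ q hq, dw₁ q hq, dw₂ q hq]
    linear_combination - b i q * wr q hq
  obtain ⟨u, su, du⟩ := poincare hB hBc
    (fun i q => l i q - s q * ε i q - (1/2) * (s q * s q + k q * (x q * x q)) * pd i v q) (fun i =>
      ((hl i).sub (ss.mul (hε i))).sub ((contDiffOn_const.mul ((ss.mul ss).add
        (sk.mul (sx.mul sx)))).mul (hn i))) (by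
    intro q hq i j
    have e1 := sm_diffAt hB ss hq
    have e2 := sm_diffAt hB sx hq
    have e3 := sm_diffAt hB sk hq
    have el := fun i => sm_diffAt hB (hl i) hq
    have eε := fun i => sm_diffAt hB (hε i) hq
    have en := fun i => sm_diffAt hB (hn i) hq
    simp (disch := fun_prop) only [pd_add, pd_sub, pd_mul, pd_const, ds q hq, dx q hq, dk q hq]
    linear_combination dl q (hBB hq) i j - s q * dε q (hBB hq) i j
      - (1/2) * (s q * s q + k q * (x q * x q)) * dn q hq i j)
  obtain ⟨U, ψ, hU, hψ, hinj, him, hpim, hfin⟩ := coords_of_functions hB hpB g K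
    (fun q => ![u q, v q, x q]) (by
      intro i
      fin_cases i
      · exact su
      · exact hv
      · exact sx) hdet (by
      intro q hq
      have hj : ∀ j, jac (fun q => ![u q, v q, x q]) q 0 j = pd j u q ∧
          jac (fun q => ![u q, v q, x q]) q 1 j = pd j v q ∧
          jac (fun q => ![u q, v q, x q]) q 2 j = pd j x q := fun j => ⟨rfl, rfl, rfl⟩
      ext i j
      simp only [Matrix.of_apply, Matrix.mul_apply, Fin.sum_univ_three, Matrix.transpose_apply,
        (hj _).1, (hj _).2.1, (hj _).2.2, du q hq, dx q hq, hg q (hBB hq)]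
      simp [pwK, hk]
      ring)
  refine ⟨U, ψ, hU, hψ, hinj, him.trans hBB, hpim, fun q hq => ⟨(hfin q hq).1, ?_⟩⟩
  exact congrFun (hfin q hq).2 1

end Stage2

section Stage3
open scoped ContDiff Topology

lemma pd_exp {n : ℕ} {f : Pt n → ℝ} {p : Pt n} (hf : DifferentiableAt ℝ f p) (i : Fin n) :
    pd i (fun q => Real.exp (f q)) p = Real.exp (f p) * pd i f p := by
  rw [pd_comp Real.differentiableAt_exp hf, Real.deriv_exp]

lemma stage3 {D B : Set (Pt 3)} (hBD : B ⊆ D) (hB : IsOpen B) (hBc : Convex ℝ B) {p : Pt 3} (hp : p ∈ B)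
    (g : Pt 3 → Fin 3 → Fin 3 → ℝ) (h μ : Pt 3 → ℝ) (ε l b : Fin 3 → Pt 3 → ℝ)
    (hh : ContDiffOn ℝ ∞ h B) (hμ : ContDiffOn ℝ ∞ μ B)
    (hε : ∀ i, ContDiffOn ℝ ∞ (ε i) B) (hl : ∀ i, ContDiffOn ℝ ∞ (l i) B)
    (hb : ∀ i, ContDiffOn ℝ ∞ (b i) B)
    (hpos : ∀ q ∈ B, 0 < h q) (hμ0 : ∀ q ∈ B, μ q ≠ 0)
    (hn : ∀ q ∈ B, ∃ i, pd i h q ≠ 0)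
    (da : ∀ q ∈ B, ∀ i j, pd i (fun r => μ r * pd j h r) q = pd j (fun r => μ r * pd i h r) q)
    (dε : ∀ q ∈ B, ∀ i j, pd i (ε j) q - pd j (ε i) q = b i q * pd j h q - b j q * pd i h q)
    (dl : ∀ q ∈ B, ∀ i j, pd i (l j) q - pd j (l i) q =
      -(μ q * pd i h q * l j q - μ q * pd j h q * l i q) - (b i q * ε j q - b j q * ε i q))
    (db : ∀ q ∈ B, ∀ i j, pd i (b j) q - pd j (b i) q
      = -(μ q * pd i h q * b j q - μ q * pd j h q * b i q)
        - μ q / h q * (ε i q * pd j h q - ε j q * pd i h q))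
    (hg : ∀ q ∈ B, ∀ i j, g q i j = pd i h q * l j q + l i q * pd j h q + ε i q * ε j q)
    (hdet : (Matrix.of (g p)).det ≠ 0) :
    ∃ (U : Set (Pt 3)) (ψ : Pt 3 → Pt 3) (α : ℝ → ℝ),
      IsOpen U ∧ ContDiffOn ℝ (⊤ : ℕ∞) ψ U ∧ Set.InjOn ψ U ∧ ψ '' U ⊆ D ∧
      p ∈ ψ '' U ∧ ContDiff ℝ (⊤ : ℕ∞) α ∧
      ∀ q ∈ U, pullback g ψ q = planeWaveM α q ∧ h (ψ q) = α (q 1) ∧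
        deriv (deriv α) (q 1) ≠ 0 := by
  have hn' : ∀ i, ContDiffOn ℝ ∞ (pd i h) B := fun i => sm_pd hB hh i
  obtain ⟨f, hf, hdf⟩ := poincare hB hBc (fun i q => - (μ q * pd i h q))
    (fun i => (hμ.mul (hn' i)).neg) (by
      intro q hq i j
      rw [pd_neg, pd_neg, da q hq])
  have hfd : ∀ q ∈ B, DifferentiableAt ℝ f q := fun q hq => sm_diffAt hB hf hq
  have hnd : ∀ q ∈ B, ∀ i, DifferentiableAt ℝ (pd i h) q := fun q hq i => sm_diffAt hB (hn' i) hq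
  have hE : ContDiffOn ℝ ∞ (fun q => Real.exp (f q)) B := hf.exp
  have hE' : ContDiffOn ℝ ∞ (fun q => Real.exp (- f q)) B := hf.neg.exp
  have dE' : ∀ q ∈ B, ∀ i, pd i (fun q => Real.exp (- f q)) q = Real.exp (- f q) * (μ q * pd i h q) := by
    intro q hq i
    rw [pd_exp (f := fun q => - f q) (hfd q hq).neg, pd_neg, hdf q hq, neg_neg]
  obtain ⟨v, hv, hdv⟩ := poincare hB hBc (fun i q => Real.exp (f q) * pd i h q)
    (fun i => hE.mul (hn' i)) (by
      intro q hq i j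
      rw [pd_mul (sm_diffAt hB hE hq) (hnd q hq j), pd_mul (sm_diffAt hB hE hq) (hnd q hq i),
        pd_exp (hfd q hq), pd_exp (hfd q hq), hdf q hq, hdf q hq, pd_comm hB hh hq i j]
      ring)
  have hee : ∀ q, Real.exp (- f q) * Real.exp (f q) = 1 := fun q => by
    rw [← Real.exp_add]; simp
  have hnv : ∀ q ∈ B, ∀ i, pd i h q = Real.exp (- f q) * pd i v q := by
    intro q hq i
    rw [hdv q hq, ← mul_assoc, hee, one_mul]
  obtain ⟨i₀, hi₀⟩ := hn p hp
  obtain ⟨α, hα, hαv⟩ := fov hB hv hh hp hnv i₀ (by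
    rw [hdv p hp]; exact mul_ne_zero (Real.exp_ne_zero _) hi₀)
  have hα1 : ContDiff ℝ ∞ (deriv α) := (contDiff_infty_iff_deriv.1 hα).2
  have hα2 : ContDiff ℝ ∞ (deriv (deriv α)) := (contDiff_infty_iff_deriv.1 hα1).2
  have hαp : α (v p) ≠ 0 := by
    rw [← hαv.self_of_nhds]; exact (hpos p hp).ne'
  obtain ⟨r, hr, hrb⟩ := Metric.isOpen_iff.1 (isOpen_ne_fun hα.continuous (continuous_const (y := (0:ℝ)))) (v p) hαp
  obtain ⟨K, hK, hKe⟩ := extend_germ (fun t => - (deriv (deriv α) t / α t)) (v p) r hr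
    ((hα2.contDiffOn.div hα.contDiffOn (fun t ht => hrb ht)).neg)
  have hvc : ContinuousAt v p := (sm_diffAt hB hv hp).continuousAt
  have hall := (hαv.and (hvc.eventually hKe)).and (hB.mem_nhds hp)
  obtain ⟨W, hWs, hWo, hpW⟩ := mem_nhds_iff.1 hall
  have hWB : W ⊆ B := fun q hq => (hWs hq).2
  have hWα : ∀ q ∈ W, h q = α (v q) := fun q hq => (hWs hq).1.1
  have hWK : ∀ q ∈ W, K (v q) = - (deriv (deriv α) (v q) / α (v q)) := fun q hq => (hWs hq).1.2
  have hvd : ∀ q ∈ B, DifferentiableAt ℝ v q := fun q hq => sm_diffAt hB hv hq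
  have hd1 : ∀ q ∈ W, deriv α (v q) = Real.exp (- f q) := by
    intro q hq
    obtain ⟨i, hi⟩ := hn q (hWB hq)
    have h1 := pd_congr hWo hWα hq i
    rw [pd_comp (hα.differentiable (by simp) _) (hvd q (hWB hq)), hdv q (hWB hq)] at h1
    have h2 : pd i h q * (deriv α (v q) - Real.exp (- f q)) = 0 := by
      linear_combination (-Real.exp (- f q)) * h1 - deriv α (v q) * pd i h q * hee q
    rcases mul_eq_zero.1 h2 with h3 | h3
    · exact absurd h3 hi
    · linarith
  have hd2 : ∀ q ∈ W, deriv (deriv α) (v q) = μ q * Real.exp (- f q) ^ 2 := by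
    intro q hq
    obtain ⟨i, hi⟩ := hn q (hWB hq)
    have h1 := pd_congr hWo hd1 hq i
    rw [pd_comp (hα1.differentiable (by simp) _) (hvd q (hWB hq)), hdv q (hWB hq), dE' q (hWB hq)] at h1
    have h2 : pd i h q * (deriv (deriv α) (v q) - μ q * Real.exp (- f q) ^ 2) = 0 := by
      linear_combination (Real.exp (- f q)) * h1 - deriv (deriv α) (v q) * pd i h q * hee q
    rcases mul_eq_zero.1 h2 with h3 | h3
    · exact absurd h3 hi
    · linarith
  obtain ⟨U, ψ, hU, hψ, hinj, hUs, hpU, hfin⟩ := stage2 hWo hpW g K hK v ε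
    (fun i q => Real.exp (- f q) * l i q) (fun i q => Real.exp (- f q) * b i q)
    (hv.mono hWB) (fun i => (hε i).mono hWB) (fun i => (hE'.mul (hl i)).mono hWB)
    (fun i => (hE'.mul (hb i)).mono hWB)
    (by
      intro q hq i j
      rw [dε q (hWB hq), hnv q (hWB hq), hnv q (hWB hq)]; ring)
    (by
      intro q hq i j
      have hq' := hWB hq
      rw [pd_mul (sm_diffAt hB hE' hq') (sm_diffAt hB (hl _) hq'), 
        pd_mul (sm_diffAt hB hE' hq') (sm_diffAt hB (hl _) hq'), dE' q hq', dE' q hq']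
      linear_combination Real.exp (- f q) * dl q hq' i j)
    (by
      intro q hq i j
      have hq' := hWB hq
      rw [pd_mul (sm_diffAt hB hE' hq') (sm_diffAt hB (hb _) hq'), 
        pd_mul (sm_diffAt hB hE' hq') (sm_diffAt hB (hb _) hq'), dE' q hq', dE' q hq',
        hWK q hq, hd2 q hq, ← hWα q hq]
      have h1 := db q hq' i j
      have h2 := hnv q hq' i
      have h3 := hnv q hq' j
      linear_combination Real.exp (- f q) * h1
        - μ q / h q * Real.exp (- f q) * (ε i q * h3 - ε j q * h2))
    (by
      intro q hq i j
      have hq' := hWB hq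
      rw [hg q hq', hnv q hq' i, hnv q hq' j]
      ring) hdet
  refine ⟨U, ψ, α, hU, hψ, hinj, hUs.trans (hWB.trans hBD), hpU, hα, ?_⟩
  intro q hq
  obtain ⟨h1, h2⟩ := hfin q hq
  have hψq : ψ q ∈ W := hUs ⟨q, hq, rfl⟩
  have h3 := hWK _ hψq
  have h4 := hWα _ hψq
  have h5 := hd2 _ hψq
  rw [h2] at h3 h4 h5
  refine ⟨?_, h4, ?_⟩
  · rw [h1]
    ext i j
    fin_cases i <;> fin_cases j <;> simp [pwK, planeWaveM, h3]
  · rw [h5]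
    exact mul_ne_zero (hμ0 _ (hWB hψq)) (pow_ne_zero _ (Real.exp_ne_zero _))

end Stage3

section FrameAlg

/-- pointwise dual frames: covectors `n, λ, ε` and vectors `k, l, e`. -/
structure DualFrm (n la ε k l e : Fin 3 → ℝ) : Prop where
  ex : ∀ (θ : Fin 3 → ℝ) i, θ i = la i * (k ⬝ᵥ θ) + n i * (l ⬝ᵥ θ) + ε i * (e ⬝ᵥ θ)
  du : ∀ s t : Fin 3, k s * la t + l s * n t + e s * ε t = if s = t then 1 else 0
  kn : k ⬝ᵥ n = 0
  kla : k ⬝ᵥ la = 1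
  ke : k ⬝ᵥ ε = 0
  ln : l ⬝ᵥ n = 1
  lla : l ⬝ᵥ la = 0
  le : l ⬝ᵥ ε = 0
  en : e ⬝ᵥ n = 0
  ela : e ⬝ᵥ la = 0
  ee : e ⬝ᵥ ε = 1

lemma DualFrm.of_du {n la ε k l e : Fin 3 → ℝ}
    (du : ∀ s t : Fin 3, k s * la t + l s * n t + e s * ε t = if s = t then 1 else 0) :
    DualFrm n la ε k l e := by
  have h1 : (Matrix.of ![k, l, e])ᵀ * Matrix.of ![la, n, ε] = 1 := by
    ext s t
    rw [Matrix.mul_apply, Fin.sum_univ_three, Matrix.one_apply, ← du s t]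
    simp
  have h2 := mul_eq_one_comm.1 h1
  have h3 : ∀ i j : Fin 3, (![la, n, ε] i) ⬝ᵥ (![k, l, e] j) = if i = j then 1 else 0 := by
    intro i j
    have := congrFun (congrFun h2 i) j
    rw [Matrix.mul_apply, Matrix.one_apply] at this
    rw [← this]
    rfl
  have h4 : ∀ i j : Fin 3, (![k, l, e] j) ⬝ᵥ (![la, n, ε] i) = if i = j then 1 else 0 := by
    intro i j
    rw [dotProduct_comm, h3]
  constructor
  · intro θ i
    have a0 := du 0 i
    have a1 := du 1 i
    have a2 := du 2 i
    simp only [dotProduct, Fin.sum_univ_three]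
    have : θ i = θ 0 * (if 0 = i then 1 else 0) + θ 1 * (if 1 = i then 1 else 0)
        + θ 2 * (if 2 = i then 1 else 0) := by
      fin_cases i <;> simp
    linear_combination this - θ 0 * a0 - θ 1 * a1 - θ 2 * a2
  · exact du
  · simpa using h4 1 0
  · simpa using h4 0 0
  · simpa using h4 2 0
  · simpa using h4 1 1
  · simpa using h4 0 1
  · simpa using h4 2 1
  · simpa using h4 1 2
  · simpa using h4 0 2
  · simpa using h4 2 2

lemma compat_alg {n la ε k l e : Fin 3 → ℝ} (F : DualFrm n la ε k l e) (t s : Fin 3 → ℝ)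
    (H : ∀ j m, n j * t m + t j * n m + s j * ε m + ε j * s m = 0) :
    (∀ j, s j = (l ⬝ᵥ s) * n j) ∧ ∀ j, t j = - (l ⬝ᵥ s) * ε j := by
  have hc : ∀ (x : Fin 3 → ℝ) m,
      (x ⬝ᵥ n) * t m + (x ⬝ᵥ t) * n m + (x ⬝ᵥ s) * ε m + (x ⬝ᵥ ε) * s m = 0 := by
    intro x m
    simp only [dotProduct, Fin.sum_univ_three]
    linear_combination x 0 * H 0 m + x 1 * H 1 m + x 2 * H 2 m
  have hcc : ∀ (x y : Fin 3 → ℝ),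
      (x ⬝ᵥ n) * (y ⬝ᵥ t) + (x ⬝ᵥ t) * (y ⬝ᵥ n) + (x ⬝ᵥ s) * (y ⬝ᵥ ε) + (x ⬝ᵥ ε) * (y ⬝ᵥ s) = 0 := by
    intro x y
    have h0 := hc x 0
    have h1 := hc x 1
    have h2 := hc x 2
    simp only [dotProduct, Fin.sum_univ_three] at *
    linear_combination y 0 * h0 + y 1 * h1 + y 2 * h2
  have e1 := hcc l l
  have e2 := hcc e e
  have e3 := hcc e l
  have he := hc e
  have hl := hc l
  simp only [F.kn, F.kla, F.ke, F.ln, F.lla, F.le, F.en, F.ela, F.ee] at e1 e2 e3 he hl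
  refine ⟨fun j => ?_, fun j => ?_⟩
  · linear_combination he j - n j * e3 - ε j * (1/2) * e2
  · linear_combination hl j - n j * (1/2) * e1

lemma ricci_alg {n la ε k l e : Fin 3 → ℝ} (F : DualFrm n la ε k l e) (A β : Fin 3 → Fin 3 → ℝ) (c : ℝ)
    (hA : ∀ i j, A i j = - A j i) (hβ : ∀ i j, β i j = - β j i)
    (H : ∀ m j, (k ⬝ᵥ fun i => A i j) * la m + (k ⬝ᵥ fun i => β i j) * ε m
      - ((l ⬝ᵥ fun i => A i j) + (e ⬝ᵥ fun i => β i j)) * n m = c * n m * n j) :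
    (∀ i j, A i j = 0) ∧ ∀ i j, β i j = - c * (ε i * n j - ε j * n i) := by
  have hc : ∀ (x : Fin 3 → ℝ) j, (k ⬝ᵥ fun i => A i j) * (x ⬝ᵥ la) + (k ⬝ᵥ fun i => β i j) * (x ⬝ᵥ ε)
      - ((l ⬝ᵥ fun i => A i j) + (e ⬝ᵥ fun i => β i j)) * (x ⬝ᵥ n) = c * (x ⬝ᵥ n) * n j := by
    intro x j
    have h0 := H 0 j
    have h1 := H 1 j
    have h2 := H 2 j
    simp only [dotProduct, Fin.sum_univ_three] at *
    linear_combination x 0 * h0 + x 1 * h1 + x 2 * h2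
  have hk := hc k
  have he := hc e
  have hl := hc l
  simp only [F.kn, F.kla, F.ke, F.ln, F.lla, F.le, F.en, F.ela, F.ee] at hk he hl
  have bil : ∀ (C : Fin 3 → Fin 3 → ℝ), (∀ i j, C i j = - C j i) → ∀ x y : Fin 3 → ℝ,
      (y ⬝ᵥ fun j => x ⬝ᵥ fun i => C i j) = - (x ⬝ᵥ fun j => y ⬝ᵥ fun i => C i j) := by
    intro C hC x y
    simp only [dotProduct, Fin.sum_univ_three]
    rw [hC 0 0, hC 0 1, hC 0 2, hC 1 1, hC 1 2, hC 2 2]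
    have := hC 0 0
    have := hC 1 1
    have := hC 2 2
    have z0 : C 0 0 = 0 := by linarith
    have z1 : C 1 1 = 0 := by linarith
    have z2 : C 2 2 = 0 := by linarith
    rw [z0, z1, z2]
    ring
  have kA : (fun j => k ⬝ᵥ fun i => A i j) = 0 := by funext j; simp only [Pi.zero_apply]; linear_combination hk j
  have kβ : (fun j => k ⬝ᵥ fun i => β i j) = 0 := by funext j; simp only [Pi.zero_apply]; linear_combination he j
  have hl' : (fun j => (l ⬝ᵥ fun i => A i j)) = (fun j => - (e ⬝ᵥ fun i => β i j) - c * n j) := by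
    funext j; linear_combination - hl j - (la j * 0)
  have dsum : ∀ x : Fin 3 → ℝ, (x ⬝ᵥ fun j => (l ⬝ᵥ fun i => A i j)) =
      - (x ⬝ᵥ fun j => (e ⬝ᵥ fun i => β i j)) - c * (x ⬝ᵥ n) := by
    intro x
    rw [hl']
    simp only [dotProduct, Fin.sum_univ_three]; ring
  have self : ∀ (C : Fin 3 → Fin 3 → ℝ), (∀ i j, C i j = - C j i) → ∀ x : Fin 3 → ℝ,
      (x ⬝ᵥ fun j => x ⬝ᵥ fun i => C i j) = 0 := by
    intro C hC x
    have := bil C hC x x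
    linarith
  have eA : (e ⬝ᵥ fun j => (l ⬝ᵥ fun i => A i j)) = 0 := by
    rw [dsum, self β hβ, F.en]; ring
  have kA2 : (k ⬝ᵥ fun j => (l ⬝ᵥ fun i => A i j)) = 0 := by
    rw [bil A hA, kA]; simp
  have kA3 : (k ⬝ᵥ fun j => (e ⬝ᵥ fun i => A i j)) = 0 := by
    rw [bil A hA, kA]; simp
  have lA3 : (l ⬝ᵥ fun j => (e ⬝ᵥ fun i => A i j)) = 0 := by
    rw [bil A hA, eA]; simp
  have lA0 : ∀ j, (l ⬝ᵥ fun i => A i j) = 0 := by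
    intro j
    rw [F.ex (fun j => l ⬝ᵥ fun i => A i j) j, eA, kA2, self A hA]; ring
  have eA0 : ∀ j, (e ⬝ᵥ fun i => A i j) = 0 := by
    intro j
    rw [F.ex (fun j => e ⬝ᵥ fun i => A i j) j, lA3, kA3, self A hA]; ring
  have eβ : ∀ j, (e ⬝ᵥ fun i => β i j) = - c * n j := by
    intro j
    have := congrFun hl' j
    simp only [lA0] at this
    linarith
  have lβ : ∀ j, (l ⬝ᵥ fun i => β i j) = c * ε j := by
    intro j
    have h1 : (e ⬝ᵥ fun j => (l ⬝ᵥ fun i => β i j)) = c := by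
      rw [bil β hβ]
      simp only [eβ]
      have := F.ln
      simp only [dotProduct, Fin.sum_univ_three] at *
      linear_combination c * this
    have h2 : (k ⬝ᵥ fun j => (l ⬝ᵥ fun i => β i j)) = 0 := by
      rw [bil β hβ, kβ]; simp
    rw [F.ex (fun j => l ⬝ᵥ fun i => β i j) j, h1, h2, self β hβ]; ring
  refine ⟨fun i j => ?_, fun i j => ?_⟩
  · have := F.ex (fun i => A i j) i
    have h1 := congrFun kA j
    simp only [Pi.zero_apply] at h1
    rw [h1, lA0, eA0] at this
    rw [this]; ring
  · have := F.ex (fun i => β i j) i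
    have h1 := congrFun kβ j
    simp only [Pi.zero_apply] at h1
    rw [h1, lβ, eβ] at this
    rw [this]; ring

/-- orthogonality completion identity -/
lemma frame_id (G : Matrix (Fin 3) (Fin 3) ℝ) (hG : Gᵀ = G) (k l : Fin 3 → ℝ)
    (hkk : k ⬝ᵥ G *ᵥ k = 0) (hkl : k ⬝ᵥ G *ᵥ l = 1) (hll : l ⬝ᵥ G *ᵥ l = 0) (i j : Fin 3) :
    G.det * ((crossProduct k l) i * (crossProduct k l) j)
      = - G i j + (G *ᵥ k) i * (G *ᵥ l) j + (G *ᵥ l) i * (G *ᵥ k) j := by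
  have hs : ∀ x y : Fin 3 → ℝ, x ⬝ᵥ G *ᵥ y = y ⬝ᵥ G *ᵥ x := by
    intro x y
    rw [Matrix.dotProduct_mulVec, ← Matrix.mulVec_transpose, hG, dotProduct_comm]
  let M : Fin 3 → Matrix (Fin 3) (Fin 3) ℝ := fun i => Matrix.of ![k, l, Pi.single i 1]
  have hM : ∀ i, (M i).det = (crossProduct k l) i := by
    intro i
    rw [Matrix.det_fin_three, cross_apply]
    fin_cases i <;> simp [M] <;> ring
  have h1 : (M i * G * (M j)ᵀ).det = (M i).det * G.det * (M j).det := by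
    rw [Matrix.det_mul, Matrix.det_mul, Matrix.det_transpose]
  have h2 : ∀ a b, (M i * G * (M j)ᵀ) a b = (M i a) ⬝ᵥ G *ᵥ (M j b) := by
    intro a b
    rw [Matrix.mul_assoc, Matrix.mul_apply, dotProduct]
    rfl
  have hi : ∀ y : Fin 3 → ℝ, (Pi.single i 1 : Fin 3 → ℝ) ⬝ᵥ y = y i := by intro y; simp
  have h3 : (M i * G * (M j)ᵀ).det = - G i j + (G *ᵥ k) i * (G *ᵥ l) j + (G *ᵥ l) i * (G *ᵥ k) j := by
    rw [Matrix.det_fin_three]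
    simp only [h2]
    have m0 : ∀ i, M i 0 = k := fun i => rfl
    have m1 : ∀ i, M i 1 = l := fun i => rfl
    have m2 : ∀ i, M i 2 = Pi.single i 1 := fun i => rfl
    simp only [m0, m1, m2, hkk, hkl, hll, hs l k, hs k (Pi.single j 1), hs l (Pi.single j 1)]
    simp
    ring
  rw [← h3, h1, hM, hM]; ring

end FrameAlg

section Cartan
open scoped ContDiff Topology

/-- covariant derivative of a covector field -/
def cdv (g : Pt 3 → Fin 3 → Fin 3 → ℝ) (θ : Fin 3 → Pt 3 → ℝ) (i j : Fin 3) (q : Pt 3) : ℝ :=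
  pd i (θ j) q - ∑ k, chr g k i j q * θ k q

lemma sm_cdv {B : Set (Pt 3)} (hB : IsOpen B) {g : Pt 3 → Fin 3 → Fin 3 → ℝ}
    (hΓ : ∀ k i j, ContDiffOn ℝ ∞ (chr g k i j) B) {θ : Fin 3 → Pt 3 → ℝ}
    (hθ : ∀ i, ContDiffOn ℝ ∞ (θ i) B) (i j : Fin 3) : ContDiffOn ℝ ∞ (cdv g θ i j) B := by
  unfold cdv
  exact (sm_pd hB (hθ j) i).sub (ContDiffOn.sum fun k _ => (hΓ k i j).mul (hθ k))

lemma curv_cdv {B : Set (Pt 3)} (hB : IsOpen B) {g : Pt 3 → Fin 3 → Fin 3 → ℝ}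
    (hΓ : ∀ k i j, ContDiffOn ℝ ∞ (chr g k i j) B) {θ : Fin 3 → Pt 3 → ℝ}
    (hθ : ∀ i, ContDiffOn ℝ ∞ (θ i) B) {q : Pt 3} (hq : q ∈ B) (i j m : Fin 3) :
    ∑ k, RiemUp g k i j m q * θ k q = -(pd i (cdv g θ j m) q - pd j (cdv g θ i m) q
      + ∑ k, (chr g k j m q * cdv g θ i k q - chr g k i m q * cdv g θ j k q)) := by
  have key : ∀ i j, pd i (pd j (θ m)) q = ∑ k, (pd i (chr g k j m) q * θ k q + chr g k j m q * pd i (θ k) q)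
      + pd i (cdv g θ j m) q := by
    intro i j
    have h1 : pd i (pd j (θ m)) q
        = pd i (fun r => ((chr g 0 j m r * θ 0 r + chr g 1 j m r * θ 1 r) + chr g 2 j m r * θ 2 r) + cdv g θ j m r) q := by
      apply pd_congr hB _ hq
      intro r _
      unfold cdv
      rw [Fin.sum_univ_three]; ring
    have d1 : ∀ k, DifferentiableAt ℝ (chr g k j m) q := fun k => sm_diffAt hB (hΓ k j m) hq
    have d2 : ∀ k, DifferentiableAt ℝ (θ k) q := fun k => sm_diffAt hB (hθ k) hq
    have d3 : DifferentiableAt ℝ (cdv g θ j m) q := sm_diffAt hB (sm_cdv hB hΓ hθ j m) hq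
    have d4 : ∀ k, DifferentiableAt ℝ (fun r => chr g k j m r * θ k r) q := fun k => (d1 k).mul (d2 k)
    rw [h1, pd_add (((d4 0).fun_add (d4 1)).fun_add (d4 2)) d3, pd_add ((d4 0).fun_add (d4 1)) (d4 2),
      pd_add (d4 0) (d4 1), pd_mul (d1 0) (d2 0), pd_mul (d1 1) (d2 1), pd_mul (d1 2) (d2 2),
      Fin.sum_univ_three]
  have hsym := pd_comm hB (hθ m) hq i j
  rw [key i j, key j i] at hsym
  have e : ∀ i k, pd i (θ k) q = cdv g θ i k q + ∑ s, chr g s i k q * θ s q := by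
    intro i k; unfold cdv; ring
  have e1 : ∀ k i j m, pd i (fun q => chr g k j m q) q = pd i (chr g k j m) q := fun _ _ _ _ => rfl
  simp only [e] at hsym
  unfold RiemUp
  simp only [Fin.sum_univ_three] at hsym ⊢
  linear_combination hsym

lemma curv_two {B : Set (Pt 3)} (hB : IsOpen B) {g : Pt 3 → Fin 3 → Fin 3 → ℝ}
    (hΓ : ∀ k i j, ContDiffOn ℝ ∞ (chr g k i j) B) {θ φ χ c d : Fin 3 → Pt 3 → ℝ}
    (hθ : ∀ i, ContDiffOn ℝ ∞ (θ i) B) (hφ : ∀ i, ContDiffOn ℝ ∞ (φ i) B)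
    (hχ : ∀ i, ContDiffOn ℝ ∞ (χ i) B) (hc : ∀ i, ContDiffOn ℝ ∞ (c i) B)
    (hd : ∀ i, ContDiffOn ℝ ∞ (d i) B)
    (H : ∀ q ∈ B, ∀ i j, cdv g θ i j q = c i q * φ j q + d i q * χ j q)
    {q : Pt 3} (hq : q ∈ B) (i j m : Fin 3) :
    ∑ k, RiemUp g k i j m q * θ k q =
      -(((pd i (c j) q - pd j (c i) q) * φ m q + c j q * cdv g φ i m q - c i q * cdv g φ j m q)
      + ((pd i (d j) q - pd j (d i) q) * χ m q + d j q * cdv g χ i m q - d i q * cdv g χ j m q)) := by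
  rw [curv_cdv hB hΓ hθ hq]
  have key : ∀ i j, pd i (cdv g θ j m) q = pd i (c j) q * φ m q + c j q * pd i (φ m) q
      + (pd i (d j) q * χ m q + d j q * pd i (χ m) q) := by
    intro i j
    have h1 : pd i (cdv g θ j m) q = pd i (fun r => c j r * φ m r + d j r * χ m r) q :=
      pd_congr hB (fun r hr => H r hr j m) hq i
    rw [h1, pd_add ((sm_diffAt hB (hc j) hq).fun_mul (sm_diffAt hB (hφ m) hq))
      ((sm_diffAt hB (hd j) hq).fun_mul (sm_diffAt hB (hχ m) hq)),
      pd_mul (sm_diffAt hB (hc j) hq) (sm_diffAt hB (hφ m) hq),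
      pd_mul (sm_diffAt hB (hd j) hq) (sm_diffAt hB (hχ m) hq)]
  rw [key i j, key j i]
  simp only [H q hq, Fin.sum_univ_three]
  simp only [cdv, Fin.sum_univ_three]
  ring

lemma ricci_eq {B : Set (Pt 3)} (hB : IsOpen B) {g : Pt 3 → Fin 3 → Fin 3 → ℝ}
    (hsym : ∀ q ∈ B, ∀ k i j, chr g k i j q = chr g k j i q) {q : Pt 3} (hq : q ∈ B) (m j : Fin 3) :
    RicciT g m j q = ∑ i, RiemUp g i i j m q := by
  have h1 : ∀ s k i j, pd s (fun q => chr g k i j q) q = pd s (fun q => chr g k j i q) q := by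
    intro s k i j
    exact pd_congr hB (fun r hr => hsym r hr k i j) hq s
  unfold RicciT RiemUp
  simp only [Fin.sum_univ_three]
  rw [h1 0 0 m j, h1 1 1 m j, h1 2 2 m j, h1 j 0 m 0, h1 j 1 m 1, h1 j 2 m 2,
    hsym q hq 0 m j, hsym q hq 1 m j, hsym q hq 2 m j, hsym q hq 0 m 0, hsym q hq 0 m 1,
    hsym q hq 0 m 2, hsym q hq 1 m 0, hsym q hq 1 m 1,
    hsym q hq 1 m 2, hsym q hq 2 m 0, hsym q hq 2 m 1,
    hsym q hq 2 m 2]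
  ring

lemma cartan {B : Set (Pt 3)} (hB : IsOpen B) {g : Pt 3 → Fin 3 → Fin 3 → ℝ}
    (hΓ : ∀ k i j, ContDiffOn ℝ ∞ (chr g k i j) B)
    (hsym : ∀ q ∈ B, ∀ k i j, chr g k i j q = chr g k j i q)
    (h μ : Pt 3 → ℝ) (ε la k l e : Fin 3 → Pt 3 → ℝ)
    (hh : ContDiffOn ℝ ∞ h B) (hμ : ContDiffOn ℝ ∞ μ B)
    (hε : ∀ i, ContDiffOn ℝ ∞ (ε i) B) (hla : ∀ i, ContDiffOn ℝ ∞ (la i) B)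
    (hl : ∀ i, ContDiffOn ℝ ∞ (l i) B)
    (F : ∀ q ∈ B, DualFrm (fun i => pd i h q) (fun i => la i q) (fun i => ε i q)
      (fun i => k i q) (fun i => l i q) (fun i => e i q))
    (hg : ∀ q ∈ B, ∀ i j, g q i j = pd i h q * la j q + la i q * pd j h q + ε i q * ε j q)
    (hcomp : ∀ q ∈ B, ∀ i j m, pd i (fun r => g r j m) q =
      ∑ t, (chr g t i j q * g q t m + chr g t i m q * g q j t))
    (hH : ∀ q ∈ B, ∀ i j, cdv g (fun i => pd i h) i j q = μ q * pd i h q * pd j h q)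
    (hR : ∀ q ∈ B, ∀ m j, RicciT g m j q = μ q / h q * pd m h q * pd j h q) :
    ∃ b : Fin 3 → Pt 3 → ℝ, (∀ i, ContDiffOn ℝ ∞ (b i) B) ∧
    (∀ q ∈ B, ∀ i j, pd i (fun r => μ r * pd j h r) q = pd j (fun r => μ r * pd i h r) q) ∧
    (∀ q ∈ B, ∀ i j, pd i (ε j) q - pd j (ε i) q = b i q * pd j h q - b j q * pd i h q) ∧
    (∀ q ∈ B, ∀ i j, pd i (la j) q - pd j (la i) q =
      -(μ q * pd i h q * la j q - μ q * pd j h q * la i q) - (b i q * ε j q - b j q * ε i q)) ∧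
    (∀ q ∈ B, ∀ i j, pd i (b j) q - pd j (b i) q
      = -(μ q * pd i h q * b j q - μ q * pd j h q * b i q)
        - μ q / h q * (ε i q * pd j h q - ε j q * pd i h q)) := by
  have hn : ∀ i, ContDiffOn ℝ ∞ (pd i h) B := fun i => sm_pd hB hh i
  let b : Fin 3 → Pt 3 → ℝ := fun i q => ∑ j, l j q * cdv g ε i j q
  have hb : ∀ i, ContDiffOn ℝ ∞ (b i) B := fun i =>
    ContDiffOn.sum fun j _ => (hl j).mul (sm_cdv hB hΓ hε i j)
  let a : Fin 3 → Pt 3 → ℝ := fun i q => μ q * pd i h q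
  have ha : ∀ i, ContDiffOn ℝ ∞ (a i) B := fun i => hμ.mul (hn i)
  -- structure equations
  have hst : ∀ q ∈ B, ∀ i, (∀ j, cdv g ε i j q = b i q * pd j h q) ∧
      ∀ j, cdv g la i j q = - (a i q) * la j q + - b i q * ε j q := by
    intro q hq i
    have dn : ∀ j, DifferentiableAt ℝ (pd j h) q := fun j => sm_diffAt hB (hn j) hq
    have dla : ∀ j, DifferentiableAt ℝ (la j) q := fun j => sm_diffAt hB (hla j) hq
    have dε : ∀ j, DifferentiableAt ℝ (ε j) q := fun j => sm_diffAt hB (hε j) hq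
    have := compat_alg (F q hq) (fun j => cdv g la i j q + a i q * la j q) (fun j => cdv g ε i j q) (by
      intro j m
      have h1 := hcomp q hq i j m
      rw [pd_congr hB (fun r hr => hg r hr j m) hq i,
        pd_add (((dn j).fun_mul (dla m)).fun_add ((dla j).fun_mul (dn m))) ((dε j).fun_mul (dε m)),
        pd_add ((dn j).fun_mul (dla m)) ((dla j).fun_mul (dn m)), pd_mul (dn j) (dla m), pd_mul (dla j) (dn m),
        pd_mul (dε j) (dε m)] at h1
      have e1 := hH q hq i j
      have e2 := hH q hq i m
      simp only [hg q hq] at h1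
      simp only [cdv, a, Fin.sum_univ_three] at *
      linear_combination h1 - la m q * e1 - la j q * e2)
    obtain ⟨h1, h2⟩ := this
    have hbq : ((fun j => l j q) ⬝ᵥ fun j => cdv g ε i j q) = b i q := rfl
    simp only [hbq] at h1 h2
    refine ⟨h1, fun j => ?_⟩
    linear_combination h2 j
  have zsm : ∀ i : Fin 3, ContDiffOn ℝ ∞ ((fun _ _ => 0 : Fin 3 → Pt 3 → ℝ) i) B := fun i => contDiffOn_const
  have cn := fun (q : Pt 3) (hq : q ∈ B) => curv_two hB hΓ hn hn hn ha zsm (fun q hq i j => by rw [hH q hq]; simp [a]) hq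
  have cε := fun (q : Pt 3) (hq : q ∈ B) => curv_two hB hΓ hε hn hn hb zsm (fun q hq i j => by rw [(hst q hq i).1 j]; simp) hq
  have cla := fun (q : Pt 3) (hq : q ∈ B) => curv_two hB hΓ hla hla hε (c := fun i q => - a i q) (d := fun i q => - b i q)
    (fun i => (ha i).neg) (fun i => (hb i).neg) (fun q hq i j => (hst q hq i).2 j) hq
  have main : ∀ q ∈ B, (∀ i j, pd i (a j) q - pd j (a i) q = 0) ∧
      ∀ i j, (pd i (b j) q - pd j (b i) q) + (a i q * b j q - a j q * b i q) =
        - (μ q / h q) * (ε i q * pd j h q - ε j q * pd i h q) := by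
    intro q hq
    have := ricci_alg (F q hq) (fun i j => pd i (a j) q - pd j (a i) q)
      (fun i j => (pd i (b j) q - pd j (b i) q) + (a i q * b j q - a j q * b i q)) (μ q / h q)
      (fun i j => by ring) (fun i j => by ring) (by
        intro m j
        have h1 : ∀ i, ∑ s, RiemUp g s i j m q * pd s h q = - ((pd i (a j) q - pd j (a i) q) * pd m h q) := by
          intro i
          rw [cn q hq i j m, hH q hq, hH q hq]
          simp only [pd_const, a]; ring
        have h2 : ∀ i, ∑ s, RiemUp g s i j m q * ε s q
            = - (((pd i (b j) q - pd j (b i) q) + (a i q * b j q - a j q * b i q)) * pd m h q) := by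
          intro i
          rw [cε q hq i j m, hH q hq, hH q hq]
          simp only [pd_const, a]; ring
        have h3 : ∀ i, ∑ s, RiemUp g s i j m q * la s q
            = (pd i (a j) q - pd j (a i) q) * la m q
              + ((pd i (b j) q - pd j (b i) q) + (a i q * b j q - a j q * b i q)) * ε m q := by
          intro i
          rw [cla q hq i j m, (hst q hq i).2, (hst q hq j).2, (hst q hq i).1, (hst q hq j).1]
          simp only [pd_neg]; ring
        have h4 : RicciT g m j q = ∑ i, (k i q * (∑ s, RiemUp g s i j m q * la s q)
            + l i q * (∑ s, RiemUp g s i j m q * pd s h q) + e i q * (∑ s, RiemUp g s i j m q * ε s q)) := by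
          rw [ricci_eq hB hsym hq]
          refine Finset.sum_congr rfl fun i _ => ?_
          have du := (F q hq).du i
          have h5 : RiemUp g i i j m q = ∑ s, RiemUp g s i j m q * (if i = s then 1 else 0) := by simp
          rw [h5]
          simp only [← du, Fin.sum_univ_three]
          ring
        rw [← hR q hq, h4]
        simp only [h1, h2, h3]
        simp only [dotProduct, Fin.sum_univ_three]
        ring)
    exact this
  refine ⟨b, hb, ?_, ?_, ?_, ?_⟩
  · intro q hq i j
    have := (main q hq).1 i j
    linarith
  · intro q hq i j
    have h1 := (hst q hq i).1 j
    have h2 := (hst q hq j).1 i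
    simp only [cdv, Fin.sum_univ_three, hsym q hq _ j i] at h1 h2
    linear_combination h1 - h2
  · intro q hq i j
    have h1 := (hst q hq i).2 j
    have h2 := (hst q hq j).2 i
    simp only [cdv, Fin.sum_univ_three, hsym q hq _ j i] at h1 h2
    simp only [a] at h1 h2
    linear_combination h1 - h2
  · intro q hq i j
    have := (main q hq).2 i j
    simp only [a] at this
    linear_combination this

end Cartan

section PointAlg

lemma frame_pt (G : Matrix (Fin 3) (Fin 3) ℝ) (hG : Gᵀ = G) (hdet : G.det < 0)
    (n la ε k l e : Fin 3 → ℝ) (hk : G *ᵥ k = n) (hkn : k ⬝ᵥ n = 0)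
    (hln : l ⬝ᵥ n = 1) (hl : G *ᵥ l = la) (hll : l ⬝ᵥ la = 0)
    (hε : ∀ i, ε i = Real.sqrt (- G.det) * (crossProduct k l) i) (he : G *ᵥ e = ε) :
    (∀ i j, G i j = n i * la j + la i * n j + ε i * ε j) ∧ DualFrm n la ε k l e := by
  have hs : ∀ x y : Fin 3 → ℝ, x ⬝ᵥ G *ᵥ y = y ⬝ᵥ G *ᵥ x := by
    intro x y
    rw [Matrix.dotProduct_mulVec, ← Matrix.mulVec_transpose, hG, dotProduct_comm]
  have hid : ∀ i j, G i j = n i * la j + la i * n j + ε i * ε j := by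
    intro i j
    have h1 := frame_id G hG k l (by rw [hk, hkn]) (by rw [hs, hk, hln]) (by rw [hl, hll]) i j
    rw [hk, hl] at h1
    have h2 : Real.sqrt (- G.det) * Real.sqrt (- G.det) = - G.det := Real.mul_self_sqrt (by linarith)
    rw [hε i, hε j]
    linear_combination h1 - crossProduct k l i * crossProduct k l j * h2
  refine ⟨hid, DualFrm.of_du ?_⟩
  let M : Matrix (Fin 3) (Fin 3) ℝ := Matrix.of fun s t => k s * la t + l s * n t + e s * ε t
  have hu : IsUnit G.det := isUnit_iff_ne_zero.2 hdet.ne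
  have hGM : G * M = G := by
    ext i j
    have a1 := congrFun hk i
    have a2 := congrFun hl i
    have a3 := congrFun he i
    simp only [Matrix.mulVec, dotProduct, Fin.sum_univ_three] at a1 a2 a3
    rw [Matrix.mul_apply, Fin.sum_univ_three]
    simp only [M, Matrix.of_apply]
    linear_combination la j * a1 + n j * a2 + ε j * a3 - hid i j
  have hM : M = 1 := by
    have := congrArg (fun X => G⁻¹ * X) hGM
    simpa [← Matrix.mul_assoc, Matrix.nonsing_inv_mul _ hu] using this
  intro s t
  have := congrFun (congrFun hM s) t
  rw [Matrix.one_apply] at this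
  exact this

lemma ricci_pt (G Gi ρ H : Matrix (Fin 3) (Fin 3) ℝ) (h1 : G * Gi = 1)
    {n la ε k l e : Fin 3 → ℝ} (F : DualFrm n la ε k l e)
    (hk : Gi *ᵥ n = k) (he : Gi *ᵥ ε = e) (h c : ℝ) (hpos : 0 < h)
    (hw : ∀ i j, h * ρ i j - H i j + c * G i j = 0)
    (hHs : ∀ i j, H i j = H j i) (hHk : H *ᵥ k = 0)
    (hnil : (Gi * ρ) ^ 2 = 0) (hne : Gi * ρ ≠ 0) :
    (∀ i j, H i j = (l ⬝ᵥ H *ᵥ l) * n i * n j) ∧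
    (∀ i j, ρ i j = (l ⬝ᵥ H *ᵥ l) / h * n i * n j) ∧ (l ⬝ᵥ H *ᵥ l) ≠ 0 := by
  have h2 : Gi * G = 1 := mul_eq_one_comm.1 h1
  have hGk : G *ᵥ k = n := by rw [← hk, Matrix.mulVec_mulVec, h1, Matrix.one_mulVec]
  have hρk : ρ *ᵥ k = (- (c / h)) • n := by
    funext i
    have a := congrFun hHk i
    have b := congrFun hGk i
    simp only [Matrix.mulVec, dotProduct, Fin.sum_univ_three, Pi.zero_apply, Pi.smul_apply, smul_eq_mul] at a b ⊢
    have w0 := hw i 0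
    have w1 := hw i 1
    have w2 := hw i 2
    have : h * (ρ i 0 * k 0 + ρ i 1 * k 1 + ρ i 2 * k 2) = - c * n i := by
      linear_combination k 0 * w0 + k 1 * w1 + k 2 * w2 + a - c * b
    field_simp
    linear_combination this
  have hRk : (Gi * ρ) *ᵥ k = (- (c / h)) • k := by
    rw [← Matrix.mulVec_mulVec, hρk, Matrix.mulVec_smul, hk]
  have hk0 : k ≠ 0 := by
    intro h0
    have := F.kla
    rw [h0] at this
    simp at this
  have hc : c = 0 := by
    have a : ((Gi * ρ) ^ 2) *ᵥ k = (c / h) ^ 2 • k := by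
      rw [pow_two, ← Matrix.mulVec_mulVec, hRk, Matrix.mulVec_smul, hRk, smul_smul]
      congr 1; ring
    rw [hnil, Matrix.zero_mulVec] at a
    rcases smul_eq_zero.1 a.symm with h3 | h3
    · have := pow_eq_zero_iff (two_ne_zero) |>.1 h3
      rcases div_eq_zero_iff.1 this with h4 | h4
      · exact h4
      · exact absurd h4 hpos.ne'
    · exact absurd h3 hk0
  have hHρ : ∀ i j, H i j = h * ρ i j := by
    intro i j
    have := hw i j
    rw [hc] at this
    linarith
  have hρs : ∀ i j, ρ i j = ρ j i := by
    intro i j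
    have a := hHs i j
    rw [hHρ, hHρ] at a
    exact mul_left_cancel₀ hpos.ne' a
  have hρk0 : ρ *ᵥ k = 0 := by rw [hρk, hc]; simp
  have hz : ρ * (Gi * ρ) = 0 := by
    have : G * ((Gi * ρ) ^ 2) = ρ * (Gi * ρ) := by
      rw [pow_two, Matrix.mul_assoc, ← Matrix.mul_assoc, h1, Matrix.one_mul]
    rw [← this, hnil, Matrix.mul_zero]
  have hkθ : ∀ i, k ⬝ᵥ ρ i = 0 := by
    intro i
    rw [dotProduct_comm]; exact congrFun hρk0 i
  have heθ : ∀ i, e ⬝ᵥ ρ i = 0 := by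
    intro i
    have a1 : ρ i = (l ⬝ᵥ ρ i) • n + (e ⬝ᵥ ρ i) • ε := by
      funext j
      have := F.ex (ρ i) j
      rw [hkθ] at this
      simp only [Pi.add_apply, Pi.smul_apply, smul_eq_mul]
      linear_combination this
    have a2 : Gi *ᵥ (ρ i) = (l ⬝ᵥ ρ i) • k + (e ⬝ᵥ ρ i) • e := by
      conv_lhs => rw [a1]
      rw [Matrix.mulVec_add, Matrix.mulVec_smul, Matrix.mulVec_smul, hk, he]
    have a3 : (ρ i) ⬝ᵥ Gi *ᵥ (ρ i) = 0 := by
      have := congrFun (congrFun hz i) i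
      rw [Matrix.mul_apply] at this
      simp only [Matrix.zero_apply] at this
      rw [← this]
      simp only [Matrix.mul_apply, dotProduct, Matrix.mulVec, Fin.sum_univ_three]
      rw [hρs 0 i, hρs 1 i, hρs 2 i]
    rw [a2, dotProduct_add, dotProduct_smul, dotProduct_smul, dotProduct_comm (ρ i) k, hkθ, dotProduct_comm (ρ i) e] at a3
    simpa using a3
  have hρ1 : ∀ i j, ρ i j = (l ⬝ᵥ ρ i) * n j := by
    intro i j
    have := F.ex (ρ i) j
    rw [hkθ, heθ] at this
    linear_combination this
  have sw : ∀ x y : Fin 3 → ℝ, (x ⬝ᵥ fun i => y ⬝ᵥ ρ i) = (y ⬝ᵥ fun i => x ⬝ᵥ ρ i) := by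
    intro x y
    simp only [dotProduct, Fin.sum_univ_three]
    rw [hρs 0 1, hρs 0 2, hρs 1 2]
    ring
  have hρ2 : ∀ i, (l ⬝ᵥ ρ i) = (l ⬝ᵥ fun i => l ⬝ᵥ ρ i) * n i := by
    intro i
    have := F.ex (fun i => l ⬝ᵥ ρ i) i
    rw [sw k l, sw e l] at this
    simp only [hkθ, heθ] at this
    have z : (l ⬝ᵥ fun _ : Fin 3 => (0:ℝ)) = 0 := by simp [dotProduct]
    rw [z] at this
    linear_combination this
  have hμ : (l ⬝ᵥ H *ᵥ l) = h * (l ⬝ᵥ fun i => l ⬝ᵥ ρ i) := by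
    simp only [dotProduct, Matrix.mulVec, Fin.sum_univ_three, hHρ]
    ring
  have hρf : ∀ i j, ρ i j = (l ⬝ᵥ H *ᵥ l) / h * n i * n j := by
    intro i j
    rw [hμ, mul_div_cancel_left₀ _ hpos.ne', hρ1, hρ2]
  refine ⟨?_, hρf, ?_⟩
  · intro i j
    rw [hHρ, hρf]; field_simp
  · intro h0
    apply hne
    have : ρ = 0 := by
      ext i j
      rw [hρf, h0]; simp
    rw [this, Matrix.mul_zero]

lemma lor_det {A : Matrix (Fin 3) (Fin 3) ℝ} (h : IsLorentz3 A) : A.det < 0 := by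
  obtain ⟨-, P, -, hP⟩ := h
  have := congrArg Matrix.det hP
  rw [Matrix.det_mul, Matrix.det_mul, Matrix.det_transpose, Matrix.det_diagonal, Fin.prod_univ_three] at this
  simp at this
  by_contra hn
  push Not at hn
  nlinarith [mul_nonneg (mul_self_nonneg P.det) hn]

end PointAlg

section Metric
open scoped ContDiff Topology

variable {D : Set (Pt 3)} {g : Pt 3 → Fin 3 → Fin 3 → ℝ}

lemma sm_det (hg : ∀ i j, ContDiffOn ℝ ∞ (fun p => g p i j) D) :
    ContDiffOn ℝ ∞ (fun p => (Matrix.of (g p)).det) D := by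
  simp only [Matrix.det_fin_three, Matrix.of_apply]
  fun_prop

lemma sm_ginv (hg : ∀ i j, ContDiffOn ℝ ∞ (fun p => g p i j) D)
    (hdet : ∀ p ∈ D, (Matrix.of (g p)).det < 0) (i j : Fin 3) :
    ContDiffOn ℝ ∞ (fun p => ginv g p i j) D := by
  have h1 : ∀ p, ginv g p i j = ((Matrix.of (g p)).det)⁻¹ * (Matrix.of (g p)).adjugate i j := by
    intro p
    unfold ginv
    rw [Matrix.inv_def]
    simp
  simp only [h1]
  refine ContDiffOn.mul ((sm_det hg).inv fun p hp => (hdet p hp).ne) ?_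
  simp only [Matrix.adjugate_fin_three, Matrix.of_apply]
  fin_cases i <;> fin_cases j <;> simp <;> fun_prop

lemma sm_chr (hD : IsOpen D) (hg : ∀ i j, ContDiffOn ℝ ∞ (fun p => g p i j) D)
    (hdet : ∀ p ∈ D, (Matrix.of (g p)).det < 0) (k i j : Fin 3) :
    ContDiffOn ℝ ∞ (chr g k i j) D := by
  unfold chr
  refine contDiffOn_const.mul (ContDiffOn.sum fun l _ => (sm_ginv hg hdet k l).mul ?_)
  exact ((sm_pd hD (hg l j) i).add (sm_pd hD (hg l i) j)).sub (sm_pd hD (hg i j) l)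

lemma chr_symm (hD : IsOpen D) (hs : ∀ q ∈ D, ∀ i j, g q i j = g q j i) {q : Pt 3} (hq : q ∈ D)
    (k i j : Fin 3) : chr g k i j q = chr g k j i q := by
  unfold chr
  congr 1
  refine Finset.sum_congr rfl fun l _ => ?_
  rw [pd_congr hD (fun r hr => hs r hr i j) hq l]
  ring

lemma chr_low (hdet : ∀ p ∈ D, (Matrix.of (g p)).det < 0) {q : Pt 3} (hq : q ∈ D) (m i j : Fin 3) :
    ∑ k, g q m k * chr g k i j q =
      (1/2) * (pd i (fun q => g q m j) q + pd j (fun q => g q m i) q - pd m (fun q => g q i j) q) := by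
  have hu : IsUnit (Matrix.of (g q)).det := isUnit_iff_ne_zero.2 (hdet q hq).ne
  have h1 : Matrix.of (g q) * ginv g q = 1 := Matrix.mul_nonsing_inv _ hu
  set Y : Fin 3 → ℝ := fun l => (pd i (fun q => g q l j) q + pd j (fun q => g q l i) q - pd l (fun q => g q i j) q) with hY
  have h2 : ∀ k, chr g k i j q = (1/2) * (ginv g q *ᵥ Y) k := fun k => rfl
  have h3 : Matrix.of (g q) *ᵥ (ginv g q *ᵥ Y) = Y := by
    rw [Matrix.mulVec_mulVec, h1, Matrix.one_mulVec]
  have h4 := congrFun h3 m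
  simp only [h2]
  rw [show (pd i (fun q => g q m j) q + pd j (fun q => g q m i) q - pd m (fun q => g q i j) q) = Y m from rfl,
    ← h4]
  simp only [Matrix.mulVec, dotProduct, Fin.sum_univ_three, Matrix.of_apply]
  ring

lemma chr_comp (hD : IsOpen D) (hs : ∀ q ∈ D, ∀ i j, g q i j = g q j i)
    (hdet : ∀ p ∈ D, (Matrix.of (g p)).det < 0) {q : Pt 3} (hq : q ∈ D) (i j m : Fin 3) :
    pd i (fun r => g r j m) q = ∑ t, (chr g t i j q * g q t m + chr g t i m q * g q j t) := by
  have a := chr_low hdet hq m i j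
  have b := chr_low hdet hq j i m
  have c : ∀ s x y, pd s (fun r => g r x y) q = pd s (fun r => g r y x) q := fun s x y =>
    pd_congr hD (fun r hr => hs r hr x y) hq s
  rw [c i m j, c j m i] at a
  rw [c m j i] at b
  simp only [hs q hq m] at a
  simp only [Fin.sum_univ_three] at a b ⊢
  linear_combination -a - b

lemma hess_k (hD : IsOpen D) (hg : ∀ i j, ContDiffOn ℝ ∞ (fun p => g p i j) D)
    (hs : ∀ q ∈ D, ∀ i j, g q i j = g q j i)
    (hdet : ∀ p ∈ D, (Matrix.of (g p)).det < 0) (h : Pt 3 → ℝ) (k : Fin 3 → Pt 3 → ℝ)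
    (hn : ∀ i, ContDiffOn ℝ ∞ (pd i h) D)
    (hk : ∀ i, ContDiffOn ℝ ∞ (k i) D) (hnk : ∀ q ∈ D, ∀ i, pd i h q = ∑ j, g q i j * k j q)
    (hkn : ∀ q ∈ D, ∑ i, pd i h q * k i q = 0) {q : Pt 3} (hq : q ∈ D) (i : Fin 3) :
    ∑ j, Hess g h i j q * k j q = 0 := by
  have dn : ∀ j, DifferentiableAt ℝ (pd j h) q := fun j => sm_diffAt hD (hn j) hq
  have dk : ∀ j, DifferentiableAt ℝ (k j) q := fun j => sm_diffAt hD (hk j) hq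
  have dg : ∀ i j, DifferentiableAt ℝ (fun p => g p i j) q := fun i j => sm_diffAt hD (hg i j) hq
  have e1 : pd i (fun r => pd 0 h r * k 0 r + pd 1 h r * k 1 r + pd 2 h r * k 2 r) q = 0 := by
    rw [pd_congr hD (f' := fun _ => 0) (fun r hr => by rw [← hkn r hr, Fin.sum_univ_three]) hq i, pd_const]
  rw [pd_add (((dn 0).fun_mul (dk 0)).fun_add ((dn 1).fun_mul (dk 1))) ((dn 2).fun_mul (dk 2)),
    pd_add ((dn 0).fun_mul (dk 0)) ((dn 1).fun_mul (dk 1)), pd_mul (dn 0) (dk 0), pd_mul (dn 1) (dk 1),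
    pd_mul (dn 2) (dk 2)] at e1
  have e2 : ∀ j, pd i (pd j h) q = (pd i (fun r => g r j 0) q * k 0 q + g q j 0 * pd i (k 0) q)
      + (pd i (fun r => g r j 1) q * k 1 q + g q j 1 * pd i (k 1) q)
      + (pd i (fun r => g r j 2) q * k 2 q + g q j 2 * pd i (k 2) q) := by
    intro j
    rw [pd_congr hD (f' := fun r => g r j 0 * k 0 r + g r j 1 * k 1 r + g r j 2 * k 2 r)
      (fun r hr => by rw [hnk r hr, Fin.sum_univ_three]) hq i,
      pd_add (((dg j 0).fun_mul (dk 0)).fun_add ((dg j 1).fun_mul (dk 1))) ((dg j 2).fun_mul (dk 2)),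
      pd_add ((dg j 0).fun_mul (dk 0)) ((dg j 1).fun_mul (dk 1)), pd_mul (dg j 0) (dk 0),
      pd_mul (dg j 1) (dk 1), pd_mul (dg j 2) (dk 2)]
  -- contract: `k^j ∂_i n_j = (1/2) ∂_i g_{js} k^j k^s`
  have n0 := hnk q hq 0
  have n1 := hnk q hq 1
  have n2 := hnk q hq 2
  have s01 := hs q hq 0 1
  have s02 := hs q hq 0 2
  have s12 := hs q hq 1 2
  have f0 := e2 0
  have f1 := e2 1
  have f2 := e2 2
  simp only [chr_comp hD hs hdet hq] at f0 f1 f2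
  unfold Hess
  have e0 : ∀ i j, pd i (fun q => pd j h q) q = pd i (pd j h) q := fun _ _ => rfl
  simp only [Fin.sum_univ_three] at n0 n1 n2 f0 f1 f2 ⊢
  rw [← s01, ← s02] at *
  rw [← s12] at *
  simp only [e0]
  have ff : k 0 q * pd i (pd 0 h) q + k 1 q * pd i (pd 1 h) q + k 2 q * pd i (pd 2 h) q
      = (pd 0 h q * pd i (k 0) q + pd 1 h q * pd i (k 1) q + pd 2 h q * pd i (k 2) q)
       + 2 * (k 0 q * (chr g 0 i 0 q * pd 0 h q + chr g 1 i 0 q * pd 1 h q + chr g 2 i 0 q * pd 2 h q)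
        + k 1 q * (chr g 0 i 1 q * pd 0 h q + chr g 1 i 1 q * pd 1 h q + chr g 2 i 1 q * pd 2 h q)
        + k 2 q * (chr g 0 i 2 q * pd 0 h q + chr g 1 i 2 q * pd 1 h q + chr g 2 i 2 q * pd 2 h q)) := by
    rw [f0, f1, f2, n0, n1, n2]
    ring
  linear_combination (1/2) * e1 + (1/2) * ff

end Metric
/-- A non-flat 3-dimensional isotropic solution (written in an
arbitrary coordinate chart `D ⊆ ℝ³`) of the vacuum weighted Einstein field
equation whose Ricci operator is 2-step nilpotent is a plane wave: around
each point there are local coordinates `(u,v,x) = (q 0, q 1, q 2)` in which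
the metric is `dv(2du − (α''(v)/α(v))x² dv) + dx²` and `h = α(v)` with
`α'' ≠ 0`. -/
theorem isotropic_two_step_is_plane_wave
    (D : Set (Pt 3)) (hD : IsOpen D)
    (g : Pt 3 → Fin 3 → Fin 3 → ℝ) (h : Pt 3 → ℝ) (Λ : ℝ)
    (hgsm : ∀ i j, ContDiffOn ℝ (⊤ : ℕ∞) (fun p => g p i j) D)
    (hlor : ∀ p ∈ D, IsLorentz3 (Matrix.of (g p)))
    (hhsm : ContDiffOn ℝ (⊤ : ℕ∞) h D)
    (hpos : ∀ p ∈ D, 0 < h p)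
    (hsol : ∀ p ∈ D, WEFEat g h Λ p)
    (hlight : ∀ p ∈ D, gradNorm2 g h p = 0 ∧ gradV g h p ≠ 0)
    (hnonflat : ∀ p ∈ D, RicOpM g p ≠ 0)
    (hnil2 : ∀ p ∈ D, RicOpM g p ^ 2 = 0) :
    ∀ p ∈ D, ∃ (U : Set (Pt 3)) (ψ : Pt 3 → Pt 3) (α : ℝ → ℝ),
      IsOpen U ∧ ContDiffOn ℝ (⊤ : ℕ∞) ψ U ∧ Set.InjOn ψ U ∧ ψ '' U ⊆ D ∧
      p ∈ ψ '' U ∧ ContDiff ℝ (⊤ : ℕ∞) α ∧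
      ∀ q ∈ U, pullback g ψ q = planeWaveM α q ∧ h (ψ q) = α (q 1) ∧
        deriv (deriv α) (q 1) ≠ 0 := by
  have hs : ∀ q ∈ D, ∀ i j, g q i j = g q j i := fun q hq i j =>
    ((hlor q hq).1.apply j i)
  have hdet : ∀ q ∈ D, (Matrix.of (g q)).det < 0 := fun q hq => lor_det (hlor q hq)
  have hn : ∀ i, ContDiffOn ℝ (⊤ : ℕ∞) (pd i h) D := fun i => sm_pd hD hhsm i
  have hgi := fun i j => sm_ginv hgsm hdet i j
  have hΓ := fun k i j => sm_chr hD hgsm hdet k i j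
  have h1 : ∀ q ∈ D, Matrix.of (g q) * ginv g q = 1 := fun q hq =>
    Matrix.mul_nonsing_inv _ (isUnit_iff_ne_zero.2 (hdet q hq).ne)
  -- the gradient
  let k : Fin 3 → Pt 3 → ℝ := fun i q => gradV g h q i
  have hk : ∀ i, ContDiffOn ℝ (⊤ : ℕ∞) (k i) D := by
    intro i
    exact ContDiffOn.sum fun j _ => (hgi i j).mul (hn j)
  have hkv : ∀ q, ginv g q *ᵥ (fun j => pd j h q) = fun i => k i q := fun q => rfl
  have hGk : ∀ q ∈ D, Matrix.of (g q) *ᵥ (fun i => k i q) = fun j => pd j h q := by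
    intro q hq
    rw [← hkv, Matrix.mulVec_mulVec, h1 q hq, Matrix.one_mulVec]
  have hnk : ∀ q ∈ D, ∀ i, pd i h q = ∑ j, g q i j * k j q := fun q hq i =>
    (congrFun (hGk q hq) i).symm
  have hkn : ∀ q ∈ D, ∑ i, pd i h q * k i q = 0 := by
    intro q hq
    rw [← (hlight q hq).1]
    simp only [gradNorm2, k, gradV, Fin.sum_univ_three]
    ring
  have hHk := fun q (hq : q ∈ D) i => hess_k hD hgsm hs hdet h k hn hk hnk hkn hq i
  intro p hp
  have hex : ∀ q ∈ D, ∃ i, pd i h q ≠ 0 := by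
    intro q hq
    by_contra hcon
    push Not at hcon
    apply (hlight q hq).2
    funext i
    simp [gradV, hcon]
  obtain ⟨a, ha⟩ := hex p hp
  have hev : ∀ᶠ q in nhds p, q ∈ D ∧ pd a h q ≠ 0 :=
    (hD.eventually_mem hp).and
      ((sm_diffAt hD (hn a) hp).continuousAt.eventually_ne ha)
  obtain ⟨r, hr, hrb⟩ := Metric.eventually_nhds_iff_ball.1 hev
  set B := Metric.ball p r with hBdef
  have hB : IsOpen B := Metric.isOpen_ball
  have hBD : B ⊆ D := fun q hq => (hrb q hq).1
  have hna : ∀ q ∈ B, pd a h q ≠ 0 := fun q hq => (hrb q hq).2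
  let l : Fin 3 → Pt 3 → ℝ := fun i q =>
    ((Pi.single a 1 : Fin 3 → ℝ) i - g q a a / (2 * pd a h q) * k i q) / pd a h q
  have hl : ∀ i, ContDiffOn ℝ (⊤ : ℕ∞) (l i) B := by
    intro i
    refine ContDiffOn.div (contDiffOn_const.sub (ContDiffOn.mul (ContDiffOn.div ((hgsm a a).mono hBD)
      (contDiffOn_const.mul ((hn a).mono hBD)) ?_) ((hk i).mono hBD))) ((hn a).mono hBD) hna
    intro q hq
    exact mul_ne_zero two_ne_zero (hna q hq)
  let la : Fin 3 → Pt 3 → ℝ := fun i q => ∑ j, g q i j * l j q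
  have hla : ∀ i, ContDiffOn ℝ (⊤ : ℕ∞) (la i) B := fun i =>
    ContDiffOn.sum fun j _ => ((hgsm i j).mono hBD).mul (hl j)
  let ε : Fin 3 → Pt 3 → ℝ := fun i q => Real.sqrt (- (Matrix.of (g q)).det) *
    (crossProduct (fun i => k i q) (fun i => l i q)) i
  have hkB : ∀ i, ContDiffOn ℝ (⊤ : ℕ∞) (k i) B := fun i => (hk i).mono hBD
  have hε : ∀ i, ContDiffOn ℝ (⊤ : ℕ∞) (ε i) B := by
    intro i
    refine ContDiffOn.mul (ContDiffOn.sqrt ((sm_det hgsm).mono hBD).neg fun q hq => ?_) ?_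
    · have := hdet q (hBD hq)
      exact (neg_pos.2 this).ne'
    · simp only [cross_apply]
      fin_cases i
      · exact ((hkB 1).mul (hl 2)).sub ((hkB 2).mul (hl 1))
      · exact ((hkB 2).mul (hl 0)).sub ((hkB 0).mul (hl 2))
      · exact ((hkB 0).mul (hl 1)).sub ((hkB 1).mul (hl 0))
  let e : Fin 3 → Pt 3 → ℝ := fun i q => (ginv g q *ᵥ fun j => ε j q) i
  have hfr : ∀ q ∈ B, (∀ i j, (Matrix.of (g q)) i j = pd i h q * la j q + la i q * pd j h q + ε i q * ε j q) ∧
      DualFrm (fun i => pd i h q) (fun i => la i q) (fun i => ε i q)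
      (fun i => k i q) (fun i => l i q) (fun i => e i q) := by
    intro q hq
    have hqD := hBD hq
    have hsq := hna q hq
    have ekn := hkn q hqD
    have hna2 := hnk q hqD a
    have elv : (fun i => l i q) = (pd a h q)⁻¹ • ((Pi.single a 1 : Fin 3 → ℝ)
        - (g q a a / (2 * pd a h q)) • fun i => k i q) := by
      funext i
      simp only [l, Pi.smul_apply, Pi.sub_apply, smul_eq_mul]
      rw [div_eq_inv_mul]
    have kn : (fun i => k i q) ⬝ᵥ (fun i => pd i h q) = 0 := by
      rw [dotProduct_comm]; exact ekn
    have ln : (fun i => l i q) ⬝ᵥ (fun i => pd i h q) = 1 := by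
      rw [elv, smul_dotProduct, sub_dotProduct, smul_dotProduct, kn]
      simp [hsq]
    have hlav : (fun i => la i q) = (pd a h q)⁻¹ • ((fun i => g q i a)
        - (g q a a / (2 * pd a h q)) • fun i => pd i h q) := by
      have : (fun i => la i q) = Matrix.of (g q) *ᵥ (fun i => l i q) := rfl
      rw [this, elv, Matrix.mulVec_smul, Matrix.mulVec_sub, Matrix.mulVec_smul, hGk q hqD]
      congr 2
      funext i
      simp
    refine frame_pt (Matrix.of (g q)) (hlor q hqD).1 (hdet q hqD) _ _ _ _ _ _ (hGk q hqD) kn ln rfl ?_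
      (fun i => rfl) ?_
    · have hlw : (fun i => l i q) ⬝ᵥ (fun i => g q i a)
          = (pd a h q)⁻¹ * (g q a a - (g q a a / (2 * pd a h q)) * pd a h q) := by
        rw [elv, smul_dotProduct, sub_dotProduct, smul_dotProduct]
        have : (fun i => k i q) ⬝ᵥ (fun i => g q i a) = pd a h q := by
          rw [hna2, dotProduct]
          refine Finset.sum_congr rfl fun j _ => ?_
          rw [hs q hqD j a, mul_comm]
        rw [this]
        simp
      rw [hlav, dotProduct_smul, dotProduct_sub, dotProduct_smul, ln, hlw]
      simp only [smul_eq_mul]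
      field_simp
      ring
    · change Matrix.of (g q) *ᵥ (ginv g q *ᵥ fun j => ε j q) = _
      rw [Matrix.mulVec_mulVec, h1 q hqD, Matrix.one_mulVec]
  let μ : Pt 3 → ℝ := fun q => (fun i => l i q) ⬝ᵥ (Matrix.of (fun i j => Hess g h i j q)) *ᵥ (fun i => l i q)
  have hHs : ∀ q ∈ D, ∀ i j, Hess g h i j q = Hess g h j i q := by
    intro q hq i j
    have e1 := pd_comm hD hhsm hq i j
    have e2 : ∀ i j, pd i (fun q => pd j h q) q = pd i (pd j h) q := fun _ _ => rfl
    unfold Hess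
    rw [e2, e2, e1]
    congr 1
    refine Finset.sum_congr rfl fun s _ => ?_
    rw [chr_symm hD hs hq]
  have hHsm : ∀ i j, ContDiffOn ℝ (⊤ : ℕ∞) (Hess g h i j) B := by
    intro i j
    exact (sm_cdv hD hΓ hn i j).mono hBD
  have hμ : ContDiffOn ℝ (⊤ : ℕ∞) μ B := by
    simp only [μ, dotProduct, Matrix.mulVec, Matrix.of_apply]
    exact ContDiffOn.sum fun i _ => (hl i).mul (ContDiffOn.sum fun j _ => (hHsm i j).mul (hl j))
  have hric : ∀ q ∈ B, (∀ i j, Hess g h i j q = μ q * pd i h q * pd j h q) ∧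
      (∀ i j, RicciT g i j q = μ q / h q * pd i h q * pd j h q) ∧ μ q ≠ 0 := by
    intro q hq
    have hqD := hBD hq
    have hRO : RicOpM g q = ginv g q * Matrix.of (fun i j => RicciT g i j q) := by
      ext i j
      rw [Matrix.mul_apply]; rfl
    exact ricci_pt (Matrix.of (g q)) (ginv g q) (Matrix.of fun i j => RicciT g i j q)
      (Matrix.of fun i j => Hess g h i j q) (h1 q hqD) (hfr q hq).2 (hkv q) rfl (h q) (Lap g h q + Λ)
      (hpos q hqD) (hsol q hqD) (hHs q hqD) (funext fun i => hHk q hqD i)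
      (by rw [← hRO]; exact hnil2 q hqD) (by rw [← hRO]; exact hnonflat q hqD)
  have hgB : ∀ q ∈ B, ∀ i j, g q i j = pd i h q * la j q + la i q * pd j h q + ε i q * ε j q :=
    fun q hq => (hfr q hq).1
  obtain ⟨b, hb, da, dε, dl, db⟩ := cartan hB (fun k i j => (hΓ k i j).mono hBD)
    (fun q hq => chr_symm hD hs (hBD hq)) h μ ε la k l e (hhsm.mono hBD) hμ hε hla hl
    (fun q hq => (hfr q hq).2) hgB
    (fun q hq i j m => chr_comp hD hs hdet (hBD hq) i j m)
    (fun q hq => (hric q hq).1) (fun q hq => (hric q hq).2.1)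
  exact stage3 hBD hB (convex_ball p r) (Metric.mem_ball_self hr) g h μ ε la b (hhsm.mono hBD) hμ hε hla hb
    (fun q hq => hpos q (hBD hq)) (fun q hq => (hric q hq).2.2) (fun q hq => hex q (hBD hq))
    da dε dl db hgB (hdet p hp).ne
end
end

section
/- On ℝ³ with coordinates (x,y,z) (with sinh y ≠ 0), consider the anti-de Sitter metric g = κ²(−cosh²y·dx² + dy² + sinh²y·dz²) for a constant κ > 0, which has scalar curvature τ = −6/κ². For any constants c₁, c₂ (not both zero) and any Λ ∈ ℝ, the function h(x,y,z) = κ²Λ/2 + sinh(y)(c₁cos(z) + c₂sin(z)) satisfies the vacuum weighted Einstein field equation h·ρ − Hes_h + (Δh + Λ)g = 0; moreover ‖∇h‖² = (1/κ²)(cosh²(y)(c₂sin z + c₁cos z)² + (c₂cos z − c₁sin z)²) > 0, so ∇h is spacelike. -/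
noncomputable section
open Matrix

/-- The anti-de Sitter metric `κ²(−cosh²y dx² + dy² + sinh²y dz²)` in
coordinates `(x,y,z) = (p 0, p 1, p 2)`. -/
def antiDeSitterM (κ : ℝ) (p : Pt 3) : Fin 3 → Fin 3 → ℝ := fun i j =>
  if i = 0 ∧ j = 0 then -(κ^2 * Real.cosh (p 1)^2)
  else if i = 1 ∧ j = 1 then κ^2
  else if i = 2 ∧ j = 2 then κ^2 * Real.sinh (p 1)^2 else 0

lemma aux_ginv (κ : ℝ) (hκ : 0 < κ) (p : Pt 3) (hs : Real.sinh (p 1) ≠ 0) :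
    ginv (antiDeSitterM κ) p = Matrix.diagonal
      ![-(κ^2 * Real.cosh (p 1)^2)⁻¹, (κ^2)⁻¹, (κ^2 * Real.sinh (p 1)^2)⁻¹] := by
  have hc : Real.cosh (p 1) ≠ 0 := (Real.cosh_pos _).ne'
  have hk : κ ≠ 0 := hκ.ne'
  unfold ginv
  apply Matrix.inv_eq_right_inv
  ext i j
  fin_cases i <;> fin_cases j <;>
    simp [Matrix.mul_apply, Fin.sum_univ_three, antiDeSitterM, Matrix.diagonal] <;> field_simp

lemma aux_pd {p : Pt 3} {F G : ℝ → ℝ} {F' G' : ℝ}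
    (hF : HasDerivAt F F' (p 1)) (hG : HasDerivAt G G' (p 2)) (i : Fin 3) :
    pd i (fun q => F (q 1) * G (q 2)) p =
      if i = 1 then F' * G (p 2) else if i = 2 then F (p 1) * G' else 0 := by
  have h1 : HasFDerivAt (fun q : Pt 3 => q 1) (ContinuousLinearMap.proj (R := ℝ) (φ := fun _ : Fin 3 => ℝ) 1) p :=
    hasFDerivAt_apply 1 p
  have h2 : HasFDerivAt (fun q : Pt 3 => q 2) (ContinuousLinearMap.proj (R := ℝ) (φ := fun _ : Fin 3 => ℝ) 2) p :=
    hasFDerivAt_apply 2 p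
  have h := (hF.comp_hasFDerivAt p h1).mul (hG.comp_hasFDerivAt p h2)
  have h' : HasFDerivAt (fun q : Pt 3 => F (q 1) * G (q 2)) _ p := h
  unfold pd
  rw [h'.fderiv]
  fin_cases i <;> simp [mul_comm]

lemma aux_pd1 {p : Pt 3} {F : ℝ → ℝ} {F' : ℝ}
    (hF : HasDerivAt F F' (p 1)) (i : Fin 3) :
    pd i (fun q => F (q 1)) p = if i = 1 then F' else 0 := by
  have := aux_pd hF (hasDerivAt_const (p 2) (1 : ℝ)) i
  simpa using this

lemma aux_pd_add (a : ℝ) (f : Pt 3 → ℝ) (p : Pt 3) (i : Fin 3) :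
    pd i (fun q => a + f q) p = pd i f p := by
  unfold pd
  rw [fderiv_const_add]

/-- metric components as functions of y -/
def gY (κ : ℝ) (i j : Fin 3) (y : ℝ) : ℝ :=
  if i = 0 ∧ j = 0 then -(κ^2 * Real.cosh y^2)
  else if i = 1 ∧ j = 1 then κ^2
  else if i = 2 ∧ j = 2 then κ^2 * Real.sinh y^2 else 0

def dgY (κ : ℝ) (i j : Fin 3) (y : ℝ) : ℝ :=
  if i = 0 ∧ j = 0 then -(κ^2 * (2 * Real.cosh y * Real.sinh y))
  else if i = 2 ∧ j = 2 then κ^2 * (2 * Real.sinh y * Real.cosh y) else 0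

lemma gY_deriv (κ : ℝ) (i j : Fin 3) (y : ℝ) :
    HasDerivAt (gY κ i j) (dgY κ i j y) y := by
  have h1 : HasDerivAt (fun y => -(κ^2 * Real.cosh y^2)) (-(κ^2 * (2 * Real.cosh y * Real.sinh y))) y := by
    exact (((Real.hasDerivAt_cosh y).pow 2).const_mul (κ^2)).neg.congr_deriv (by simp)
  have h2 : HasDerivAt (fun y => (κ^2 * Real.sinh y^2)) ((κ^2 * (2 * Real.sinh y * Real.cosh y))) y := by
    have := (((Real.hasDerivAt_sinh y).pow 2).const_mul (κ^2))
    simpa using this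
  have h3 (c : ℝ) := hasDerivAt_const y c
  unfold gY dgY
  fin_cases i <;> fin_cases j <;> simp <;> first | exact h3 _ | simpa using h1 | simpa using h2

lemma aux_pdg (κ : ℝ) (k i j : Fin 3) (p : Pt 3) :
    pd k (fun q => antiDeSitterM κ q i j) p = if k = 1 then dgY κ i j (p 1) else 0 :=
  aux_pd1 (F := gY κ i j) (gY_deriv κ i j (p 1)) k

/-- Christoffel symbols -/
def GY (k i j : Fin 3) (y : ℝ) : ℝ :=
  if k = 0 ∧ ((i = 0 ∧ j = 1) ∨ (i = 1 ∧ j = 0)) then Real.sinh y / Real.cosh y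
  else if k = 2 ∧ ((i = 2 ∧ j = 1) ∨ (i = 1 ∧ j = 2)) then Real.cosh y / Real.sinh y
  else if k = 1 ∧ i = 0 ∧ j = 0 then Real.cosh y * Real.sinh y
  else if k = 1 ∧ i = 2 ∧ j = 2 then -(Real.cosh y * Real.sinh y) else 0

def dGY (k i j : Fin 3) (y : ℝ) : ℝ :=
  if k = 0 ∧ ((i = 0 ∧ j = 1) ∨ (i = 1 ∧ j = 0)) then 1 / Real.cosh y ^ 2
  else if k = 2 ∧ ((i = 2 ∧ j = 1) ∨ (i = 1 ∧ j = 2)) then - 1 / Real.sinh y ^ 2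
  else if k = 1 ∧ i = 0 ∧ j = 0 then Real.cosh y ^ 2 + Real.sinh y ^ 2
  else if k = 1 ∧ i = 2 ∧ j = 2 then -(Real.cosh y ^ 2 + Real.sinh y ^ 2) else 0

lemma GY_deriv (k i j : Fin 3) (y : ℝ) (hs : Real.sinh y ≠ 0) :
    HasDerivAt (GY k i j) (dGY k i j y) y := by
  have hc : Real.cosh y ≠ 0 := (Real.cosh_pos _).ne'
  have e := Real.cosh_sq y
  have h1 : HasDerivAt (fun y => Real.sinh y / Real.cosh y) (1 / Real.cosh y ^ 2) y := by
    refine ((Real.hasDerivAt_sinh y).div (Real.hasDerivAt_cosh y) hc).congr_deriv ?_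
    field_simp
    linarith
  have h2 : HasDerivAt (fun y => Real.cosh y / Real.sinh y) (-1 / Real.sinh y ^ 2) y := by
    refine ((Real.hasDerivAt_cosh y).div (Real.hasDerivAt_sinh y) hs).congr_deriv ?_
    field_simp
    linarith
  have h4 : HasDerivAt (fun y => Real.cosh y * Real.sinh y) (Real.cosh y ^ 2 + Real.sinh y ^ 2) y := by
    refine ((Real.hasDerivAt_cosh y).mul (Real.hasDerivAt_sinh y)).congr_deriv ?_
    ring
  have h5 : HasDerivAt (fun y => -(Real.cosh y * Real.sinh y)) (-(Real.cosh y ^ 2 + Real.sinh y ^ 2)) y :=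
    h4.neg
  have h3 (c : ℝ) := hasDerivAt_const y c
  unfold GY dGY
  split_ifs
  · exact h1
  · exact h2
  · exact h4
  · exact h5
  · exact h3 _

lemma aux_chr (κ : ℝ) (hκ : 0 < κ) (k i j : Fin 3) (p : Pt 3) (hs : Real.sinh (p 1) ≠ 0) :
    chr (antiDeSitterM κ) k i j p = GY k i j (p 1) := by
  have hc : Real.cosh (p 1) ≠ 0 := (Real.cosh_pos _).ne'
  have hk : κ ≠ 0 := hκ.ne'
  unfold chr
  simp only [aux_pdg, aux_ginv κ hκ p hs, Fin.sum_univ_three]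
  fin_cases k <;> fin_cases i <;> fin_cases j <;>
    simp [dgY, GY, Matrix.diagonal] <;> field_simp

lemma aux_pdchr (κ : ℝ) (hκ : 0 < κ) (l k i j : Fin 3) (p : Pt 3) (hs : Real.sinh (p 1) ≠ 0) :
    pd l (fun q => chr (antiDeSitterM κ) k i j q) p = if l = 1 then dGY k i j (p 1) else 0 := by
  rw [← aux_pd1 (F := GY k i j) (GY_deriv k i j (p 1) hs) l]
  unfold pd
  have : (fun q => chr (antiDeSitterM κ) k i j q) =ᶠ[nhds p] fun q => GY k i j (q 1) := by
    have : ∀ᶠ q : Pt 3 in nhds p, Real.sinh (q 1) ≠ 0 := by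
      have hcont : Continuous fun q : Pt 3 => Real.sinh (q 1) :=
        Real.continuous_sinh.comp (continuous_apply 1)
      exact hcont.continuousAt.eventually_ne hs
    filter_upwards [this] with q hq
    exact aux_chr κ hκ k i j q hq
  rw [this.fderiv_eq]

lemma aux_ric (κ : ℝ) (hκ : 0 < κ) (i j : Fin 3) (p : Pt 3) (hs : Real.sinh (p 1) ≠ 0) :
    RicciT (antiDeSitterM κ) i j p = -(2 / κ^2) * antiDeSitterM κ p i j := by
  have hc : Real.cosh (p 1) ≠ 0 := (Real.cosh_pos _).ne'
  have hk : κ ≠ 0 := hκ.ne'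
  have e := Real.cosh_sq (p 1)
  have e4 : Real.cosh (p 1) ^ 4 = (Real.sinh (p 1) ^ 2 + 1) ^ 2 := by rw [← e]; ring
  unfold RicciT
  simp only [aux_pdchr κ hκ _ _ _ _ p hs, aux_chr κ hκ _ _ _ p hs, Fin.sum_univ_three]
  fin_cases i <;> fin_cases j <;>
    simp [dGY, GY, antiDeSitterM] <;> field_simp <;> ring_nf <;> (try rw [e4]) <;>
    (try rw [e]) <;> ring

lemma aux_pdh (a c₁ c₂ : ℝ) (i : Fin 3) (p : Pt 3) :
    pd i (fun q : Pt 3 => a + Real.sinh (q 1) * (c₁ * Real.cos (q 2) + c₂ * Real.sin (q 2))) p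
      = if i = 1 then Real.cosh (p 1) * (c₁ * Real.cos (p 2) + c₂ * Real.sin (p 2))
        else if i = 2 then Real.sinh (p 1) * (c₁ * (-Real.sin (p 2)) + c₂ * Real.cos (p 2))
        else 0 := by
  rw [aux_pd_add]
  exact aux_pd (F := Real.sinh) (G := fun z => c₁ * Real.cos z + c₂ * Real.sin z)
    (Real.hasDerivAt_sinh _)
    (((Real.hasDerivAt_cos _).const_mul c₁).add ((Real.hasDerivAt_sin _).const_mul c₂)) i

lemma aux_pdpdh (a c₁ c₂ : ℝ) (i j : Fin 3) (p : Pt 3) :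
    pd i (fun r => pd j (fun q : Pt 3 => a + Real.sinh (q 1) * (c₁ * Real.cos (q 2) + c₂ * Real.sin (q 2))) r) p
      = if j = 1 then
          (if i = 1 then Real.sinh (p 1) * (c₁ * Real.cos (p 2) + c₂ * Real.sin (p 2))
           else if i = 2 then Real.cosh (p 1) * (c₁ * (-Real.sin (p 2)) + c₂ * Real.cos (p 2))
           else 0)
        else if j = 2 then
          (if i = 1 then Real.cosh (p 1) * (c₁ * (-Real.sin (p 2)) + c₂ * Real.cos (p 2))
           else if i = 2 then Real.sinh (p 1) * (c₁ * (-Real.cos (p 2)) + c₂ * (-Real.sin (p 2)))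
           else 0)
        else 0 := by
  simp only [aux_pdh]
  by_cases h1 : j = 1
  · simp only [h1, if_true]
    exact aux_pd (F := Real.cosh) (G := fun z => c₁ * Real.cos z + c₂ * Real.sin z)
      (Real.hasDerivAt_cosh _)
      (((Real.hasDerivAt_cos _).const_mul c₁).add ((Real.hasDerivAt_sin _).const_mul c₂)) i
  · by_cases h2 : j = 2
    · subst h2
      simp only [h1, if_true, if_false]
      exact aux_pd (F := Real.sinh) (G := fun z => c₁ * (-Real.sin z) + c₂ * Real.cos z)
        (Real.hasDerivAt_sinh _)
        (((Real.hasDerivAt_sin _).neg.const_mul c₁).add ((Real.hasDerivAt_cos _).const_mul c₂)) i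
    · simp [h1, h2, pd]

lemma aux_hess (κ : ℝ) (hκ : 0 < κ) (a c₁ c₂ : ℝ) (i j : Fin 3) (p : Pt 3)
    (hs : Real.sinh (p 1) ≠ 0) :
    Hess (antiDeSitterM κ)
      (fun q : Pt 3 => a + Real.sinh (q 1) * (c₁ * Real.cos (q 2) + c₂ * Real.sin (q 2))) i j p
      = (Real.sinh (p 1) * (c₁ * Real.cos (p 2) + c₂ * Real.sin (p 2))) / κ^2
        * antiDeSitterM κ p i j := by
  have hc : Real.cosh (p 1) ≠ 0 := (Real.cosh_pos _).ne'
  have hk : κ ≠ 0 := hκ.ne'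
  have e := Real.cosh_sq (p 1)
  unfold Hess
  simp only [aux_pdpdh]
  simp only [aux_pdh, aux_chr κ hκ _ _ _ p hs, Fin.sum_univ_three]
  fin_cases i <;> fin_cases j <;>
    simp [GY, antiDeSitterM] <;> field_simp <;> (try rw [e]) <;> ring

lemma aux_tr (κ : ℝ) (hκ : 0 < κ) (p : Pt 3) (hs : Real.sinh (p 1) ≠ 0) (a : ℝ) :
    ∑ i, ∑ j, ginv (antiDeSitterM κ) p i j * (a * antiDeSitterM κ p i j) = 3 * a := by
  have hc : Real.cosh (p 1) ≠ 0 := (Real.cosh_pos _).ne'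
  have hk : κ ≠ 0 := hκ.ne'
  rw [aux_ginv κ hκ p hs]
  simp [Fin.sum_univ_three, antiDeSitterM, Matrix.diagonal]
  field_simp
  ring

/-- On anti-de Sitter 3-space (at points with `sinh y ≠ 0`)
the scalar curvature is `−6/κ²`, and for any constants `c₁, c₂` not both
zero and any `Λ`, the function `h = κ²Λ/2 + sinh y (c₁ cos z + c₂ sin z)`
satisfies the vacuum weighted Einstein field equation; moreover
`‖∇h‖² = (1/κ²)(cosh²y (c₂ sin z + c₁ cos z)² + (c₂ cos z − c₁ sin z)²) > 0`,
so `∇h` is spacelike. -/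
theorem antiDeSitter_solutions (κ Λ c₁ c₂ : ℝ) (hκ : 0 < κ)
    (hc : ¬(c₁ = 0 ∧ c₂ = 0)) :
    ∀ p : Pt 3, Real.sinh (p 1) ≠ 0 →
      Scal (antiDeSitterM κ) p = -(6 / κ^2) ∧
      WEFEat (antiDeSitterM κ)
        (fun q => κ^2 * Λ / 2 +
          Real.sinh (q 1) * (c₁ * Real.cos (q 2) + c₂ * Real.sin (q 2))) Λ p ∧
      gradNorm2 (antiDeSitterM κ)
        (fun q => κ^2 * Λ / 2 +
          Real.sinh (q 1) * (c₁ * Real.cos (q 2) + c₂ * Real.sin (q 2))) p =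
        (1 / κ^2) * (Real.cosh (p 1)^2 *
            (c₂ * Real.sin (p 2) + c₁ * Real.cos (p 2))^2
          + (c₂ * Real.cos (p 2) - c₁ * Real.sin (p 2))^2) ∧
      0 < gradNorm2 (antiDeSitterM κ)
        (fun q => κ^2 * Λ / 2 +
          Real.sinh (q 1) * (c₁ * Real.cos (q 2) + c₂ * Real.sin (q 2))) p := by
  intro p hs
  have hk : κ ≠ 0 := hκ.ne'
  have hch := Real.cosh_pos (p 1)
  have hc0 : Real.cosh (p 1) ≠ 0 := hch.ne'
  have hg : gradNorm2 (antiDeSitterM κ)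
        (fun q => κ^2 * Λ / 2 +
          Real.sinh (q 1) * (c₁ * Real.cos (q 2) + c₂ * Real.sin (q 2))) p =
        (1 / κ^2) * (Real.cosh (p 1)^2 *
            (c₂ * Real.sin (p 2) + c₁ * Real.cos (p 2))^2
          + (c₂ * Real.cos (p 2) - c₁ * Real.sin (p 2))^2) := by
    unfold gradNorm2
    simp only [aux_pdh, aux_ginv κ hκ p hs, Fin.sum_univ_three]
    simp [Matrix.diagonal]
    field_simp
    ring
  refine ⟨?_, ?_, hg, ?_⟩
  · unfold Scal
    simp only [aux_ric κ hκ _ _ p hs, aux_tr κ hκ p hs]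
    ring
  · intro i j
    unfold Lap
    simp only [aux_ric κ hκ _ _ p hs, aux_hess κ hκ _ _ _ _ _ p hs, aux_tr κ hκ p hs]
    field_simp
    ring
  · rw [hg]
    have h1 : 0 < c₁^2 + c₂^2 := by
      by_contra hcon
      exact hc ⟨by nlinarith [sq_nonneg c₁, sq_nonneg c₂], by nlinarith [sq_nonneg c₁, sq_nonneg c₂]⟩
    have e := Real.cosh_sq (p 1)
    have h2 := Real.sin_sq_add_cos_sq (p 2)
    have h3 : (c₂ * Real.sin (p 2) + c₁ * Real.cos (p 2))^2
        + (c₂ * Real.cos (p 2) - c₁ * Real.sin (p 2))^2 = c₁^2 + c₂^2 := by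
      linear_combination (c₁^2 + c₂^2) * h2
    have h4 : 0 ≤ Real.sinh (p 1)^2 * (c₂ * Real.sin (p 2) + c₁ * Real.cos (p 2))^2 := by
      positivity
    apply mul_pos (by positivity)
    rw [e]
    linarith
end
end
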